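/- arXiv:2402.17654 — 8 statements merged into one kernel-verified Lean document; each statement's English description precedes it below -/
import Mathlib

section
/- For all natural numbers n and r with 0 ≤ r ≤ n, one has k(r,n) = k(n−r,n); indeed, rotating the permutation matrix by 180 degrees (i.e., the map sending w to the permutation w' defined by w'(i) = n+1−w(n+1−i)) is a bijection from K(r,n) to K(n−r,n). -/
/-!
Rotation by 180 degrees reverses both positions and values, so it turns an occurrence of `3|12`
at positions `i₁ < i₂ < i₃` into an occurrence of `23|1` at the reversed positions, and vice versa,
while the separator after the first `r` positions becomes one after the first `n - r`
(`Contains312.rotate`, `Contains231.rotate`). Hence rotation maps `K(r,n)` into `K(n-r,n)` and,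
since `n - (n - r) = r`, also `K(n-r,n)` into `K(r,n)`. It is an involution, so these two
maps are mutually inverse bijections, and the equality of cardinalities follows.
-/

open scoped Classical

/-- `w` contains the split pattern `3|12` with respect to position `r`.
Positions and values are 1-indexed in the paper; here `i : Fin n` represents
position `(i : ℕ) + 1` and the value at position `i` is `(w i : ℕ) + 1`.
The condition `i₁ ≤ r < i₂` (1-indexed) becomes `(i₁ : ℕ) < r ∧ r ≤ (i₂ : ℕ)`. -/
def Contains312 (n r : ℕ) (w : Equiv.Perm (Fin n)) : Prop :=
  ∃ i₁ i₂ i₃ : Fin n, i₁ < i₂ ∧ i₂ < i₃ ∧ (i₁ : ℕ) < r ∧ r ≤ (i₂ : ℕ) ∧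
    w i₂ < w i₃ ∧ w i₃ < w i₁

/-- `w` contains the split pattern `23|1` with respect to position `r`. -/
def Contains231 (n r : ℕ) (w : Equiv.Perm (Fin n)) : Prop :=
  ∃ i₁ i₂ i₃ : Fin n, i₁ < i₂ ∧ i₂ < i₃ ∧ (i₂ : ℕ) < r ∧ r ≤ (i₃ : ℕ) ∧
    w i₃ < w i₁ ∧ w i₁ < w i₂

/-- `K(r,n)`: the permutations of `{1,…,n}` that avoid both split patterns
`3|12` and `23|1` with respect to position `r`. -/
noncomputable def splitK (r n : ℕ) : Finset (Equiv.Perm (Fin n)) :=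
  Finset.univ.filter fun w => ¬ Contains312 n r w ∧ ¬ Contains231 n r w

/-- `k(r,n) = |K(r,n)|`. -/
noncomputable def splitk (r n : ℕ) : ℕ := (splitK r n).card

/-- `K_L(r,n)`: those `w ∈ K(r,n)` for which the value `n` occurs among the
first `r` positions of the one-line notation. -/
noncomputable def splitKL (r n : ℕ) : Finset (Equiv.Perm (Fin n)) :=
  (splitK r n).filter fun w => ∃ p : Fin n, (p : ℕ) < r ∧ (w p : ℕ) + 1 = n

/-- `K_R(r,n)`: those `w ∈ K(r,n)` for which the value `n` occurs among the
last `n - r` positions of the one-line notation. -/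
noncomputable def splitKR (r n : ℕ) : Finset (Equiv.Perm (Fin n)) :=
  (splitK r n).filter fun w => ∃ p : Fin n, r ≤ (p : ℕ) ∧ (w p : ℕ) + 1 = n

/-- `φₙ`: delete the top value `n+1` from the one-line notation of
`w ∈ S_{n+1}`.  If `p = w⁻¹(top)`, then `(phiMap w) k = w k` for `k < p` and
`(phiMap w) k = w (k+1)` for `k ≥ p` (values cast down past the removed top value). -/
def phiMap {n : ℕ} (w : Equiv.Perm (Fin (n + 1))) : Equiv.Perm (Fin n) :=
  Equiv.removeNone
    ((finSuccEquiv' (w.symm (Fin.last n))).symm.trans (w.trans (finSuccEquiv' (Fin.last n))))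

/-- `a(r,s) = k(r, r+s)/(r!·s!) - 1` as a rational number. -/
noncomputable def aRat (r s : ℕ) : ℚ :=
  (splitk r (r + s) : ℚ) / ((Nat.factorial r : ℚ) * (Nat.factorial s : ℚ)) - 1

/-- Rotation of the permutation matrix by 180 degrees. -/
def rotate {n : ℕ} (w : Equiv.Perm (Fin n)) : Equiv.Perm (Fin n) :=
  (Fin.revPerm.trans w).trans Fin.revPerm

theorem rotate_apply {n : ℕ} (w : Equiv.Perm (Fin n)) (i : Fin n) :
    rotate w i = (w i.rev).rev := rfl

theorem rotate_rotate {n : ℕ} (w : Equiv.Perm (Fin n)) : rotate (rotate w) = w := by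
  ext i
  simp [rotate_apply]

theorem Contains312.rotate {n r : ℕ} {w : Equiv.Perm (Fin n)} (h : Contains312 n r w) :
    Contains231 n (n - r) (rotate w) := by
  obtain ⟨i₁, i₂, i₃, h12, h23, h1, h2, hw, hw'⟩ := h
  refine ⟨i₃.rev, i₂.rev, i₁.rev, Fin.rev_lt_rev.2 h23, Fin.rev_lt_rev.2 h12, ?_, ?_, ?_, ?_⟩
  · rw [Fin.val_rev]; omega
  · rw [Fin.val_rev]; omega
  · simpa [rotate_apply] using hw'
  · simpa [rotate_apply] using hw

theorem Contains231.rotate {n r : ℕ} {w : Equiv.Perm (Fin n)} (h : Contains231 n r w) :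
    Contains312 n (n - r) (rotate w) := by
  obtain ⟨i₁, i₂, i₃, h12, h23, h1, h2, hw, hw'⟩ := h
  refine ⟨i₃.rev, i₂.rev, i₁.rev, Fin.rev_lt_rev.2 h23, Fin.rev_lt_rev.2 h12, ?_, ?_, ?_, ?_⟩
  · rw [Fin.val_rev]; omega
  · rw [Fin.val_rev]; omega
  · simpa [rotate_apply] using hw'
  · simpa [rotate_apply] using hw

theorem rotate_mem_splitK {n r : ℕ} (hrn : r ≤ n) {w : Equiv.Perm (Fin n)}
    (hw : w ∈ splitK r n) : rotate w ∈ splitK (n - r) n := by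
  simp only [splitK, Finset.mem_filter, Finset.mem_univ, true_and] at hw ⊢
  -- A pattern in `rotate w` at `n - r` rotates back to one in `w` at `n - (n - r) = r`.
  refine ⟨fun h => hw.2 ?_, fun h => hw.1 ?_⟩
  · simpa only [rotate_rotate, Nat.sub_sub_self hrn] using h.rotate
  · simpa only [rotate_rotate, Nat.sub_sub_self hrn] using h.rotate

/-- For `0 ≤ r ≤ n`, `k(r,n) = k(n-r,n)`, and indeed rotation of the permutation
matrix by 180 degrees, i.e. `w ↦ w'` with `w'(i) = n+1-w(n+1-i)` (1-indexed),
is a bijection from `K(r,n)` onto `K(n-r,n)`. -/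
theorem stmt1 (n r : ℕ) (hrn : r ≤ n) :
    splitk r n = splitk (n - r) n ∧
      Set.BijOn (fun w : Equiv.Perm (Fin n) => (Fin.revPerm.trans w).trans Fin.revPerm)
        (splitK r n : Set (Equiv.Perm (Fin n))) (splitK (n - r) n : Set (Equiv.Perm (Fin n))) := by
  have hbij : Set.BijOn rotate (splitK r n : Set (Equiv.Perm (Fin n)))
      (splitK (n - r) n : Set (Equiv.Perm (Fin n))) := by
    refine Set.BijOn.mk (fun w hw => rotate_mem_splitK hrn hw)
      (fun v _ w _ h => ?_) (fun w hw => ⟨rotate w, ?_, rotate_rotate w⟩)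
    · rw [← rotate_rotate v, h, rotate_rotate]
    · have h := rotate_mem_splitK (Nat.sub_le n r) hw
      rwa [Nat.sub_sub_self hrn] at h
  exact ⟨Finset.card_bij (fun w _ => rotate w) (fun _ hw => hbij.mapsTo hw)
    (fun _ hv _ hw h => hbij.injOn hv hw h)
    (fun _ hw => (hbij.surjOn hw).imp fun _ h => ⟨h.1, h.2⟩), hbij⟩
end

section
/- Let n ≥ 1 and 0 ≤ r ≤ n−1. If w ∈ K(r,n) and the value n occurs at a position strictly greater than r in the one-line notation of w (i.e., w⁻¹(n) > r), then φₙ(w) ∈ K(r, n−1). -/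
/-!
Deleting the top value at position `p` identifies the positions of `phiMap w` with the positions
of `w` other than `p`, through the increasing map `p.succAbove`, and preserves the relative order
of values (`castSucc_phiMap`). Since `p` lies to the right of the divider `r`, this map also
preserves which side of the divider a position lies on (`succAbove_lt`, `le_succAbove`). Hence an
occurrence of a split pattern in `phiMap w` is carried to an occurrence of the same pattern in `w`.
-/

open scoped Classical

/-- Reading `phiMap w` at `k` is reading `w` at the `k`-th position other than that of the
top value. -/
theorem castSucc_phiMap {n : ℕ} (w : Equiv.Perm (Fin (n + 1))) (k : Fin n) :
    (phiMap w k).castSucc = w ((w.symm (Fin.last n)).succAbove k) := by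
  have hne : w ((w.symm (Fin.last n)).succAbove k) ≠ Fin.last n := fun h =>
    Fin.succAbove_ne _ k (w.eq_symm_apply.mpr h)
  obtain ⟨y, hy⟩ := Fin.exists_castSucc_eq.mpr hne
  have he : ((finSuccEquiv' (w.symm (Fin.last n))).symm.trans
      (w.trans (finSuccEquiv' (Fin.last n)))) (some k) = some y := by
    simp [← hy, finSuccEquiv'_last_apply_castSucc]
  have h := Equiv.removeNone_some _ ⟨y, he⟩
  rw [he, Option.some_inj] at h
  rw [← hy, ← h, phiMap]

theorem succAbove_lt {n r : ℕ} {p : Fin (n + 1)} {i : Fin n} (hp : r ≤ (p : ℕ))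
    (hi : (i : ℕ) < r) : (p.succAbove i : ℕ) < r := by
  rw [Fin.succAbove_of_castSucc_lt p i (Fin.lt_def.mpr (hi.trans_le hp))]
  exact hi

theorem le_succAbove {n r : ℕ} {p : Fin (n + 1)} {i : Fin n}
    (hi : r ≤ (i : ℕ)) : r ≤ (p.succAbove i : ℕ) := by
  unfold Fin.succAbove
  split_ifs <;> simp <;> lia

/-- If `w ∈ K(r, n+1)` with `0 ≤ r ≤ n` and the value `n+1` occurs at a position
strictly greater than `r` (i.e. `w⁻¹(top) > r`, 1-indexed), then `φ(w) ∈ K(r, n)`. -/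
theorem stmt2 (n r : ℕ) (hrn : r ≤ n) (w : Equiv.Perm (Fin (n + 1)))
    (hw : w ∈ splitK r (n + 1)) (hpos : r ≤ (w.symm (Fin.last n) : ℕ)) :
    phiMap w ∈ splitK r n := by
  simp only [splitK, Finset.mem_filter, Finset.mem_univ, true_and] at hw ⊢
  set p := w.symm (Fin.last n) with hp
  refine ⟨fun h => hw.1 ?_, fun h => hw.2 ?_⟩
  · obtain ⟨i₁, i₂, i₃, h12, h23, h1, h2, hv, hv'⟩ := h
    refine ⟨p.succAbove i₁, p.succAbove i₂, p.succAbove i₃,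
      p.strictMono_succAbove h12, p.strictMono_succAbove h23,
      succAbove_lt hpos h1, le_succAbove h2, ?_, ?_⟩ <;>
      simpa only [hp, ← castSucc_phiMap, Fin.castSucc_lt_castSucc_iff]
  · obtain ⟨i₁, i₂, i₃, h12, h23, h1, h2, hv, hv'⟩ := h
    refine ⟨p.succAbove i₁, p.succAbove i₂, p.succAbove i₃,
      p.strictMono_succAbove h12, p.strictMono_succAbove h23,
      succAbove_lt hpos h1, le_succAbove h2, ?_, ?_⟩ <;>
      simpa only [hp, ← castSucc_phiMap, Fin.castSucc_lt_castSucc_iff]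
end

section
/- Let n ≥ 1 and 0 ≤ r ≤ n−1. The map φₙ restricted to K_R(r,n) surjects onto K(r,n−1): for every w ∈ K(r,n−1) there exists u ∈ K_R(r,n) with φₙ(u) = w. -/
/-!
Given `w` in `K(r, n)`, insert the new maximal value into the one-line notation directly after the
first `r` entries. Deleting it again gives back `w` (`phiMap_insertTop`). In either split pattern
`3|12` or `23|1` the maximal value could only play the role of the `3`, which lies to the left of
the split; since it was inserted to the right, any occurrence of a pattern avoids it and restricts
to an occurrence in `w`. Insertion at `r` shifts only positions that lie to the right of the split,
so the restricted occurrence still has its entries on the correct sides.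
-/

open scoped Classical

/-- The permutation of `Fin (n + 1)` whose one-line notation is that of `w` with the maximal value
inserted at position `p` (counted from `0`). -/
def insertTop {n : ℕ} (p : Fin (n + 1)) (w : Equiv.Perm (Fin n)) : Equiv.Perm (Fin (n + 1)) :=
  (finSuccEquiv' p).trans ((Equiv.optionCongr w).trans (finSuccEquiv' (Fin.last n)).symm)

lemma insertTop_self {n : ℕ} (p : Fin (n + 1)) (w : Equiv.Perm (Fin n)) :
    insertTop p w p = Fin.last n := by
  simp [insertTop]

lemma insertTop_succAbove {n : ℕ} (p : Fin (n + 1)) (w : Equiv.Perm (Fin n)) (k : Fin n) :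
    insertTop p w (p.succAbove k) = (w k).castSucc := by
  simp [insertTop]

lemma phiMap_insertTop {n : ℕ} (p : Fin (n + 1)) (w : Equiv.Perm (Fin n)) :
    phiMap (insertTop p w) = w := by
  have hp : (insertTop p w).symm (Fin.last n) = p := by
    rw [Equiv.symm_apply_eq, insertTop_self]
  unfold phiMap
  rw [hp]
  have h : (finSuccEquiv' p).symm.trans ((insertTop p w).trans (finSuccEquiv' (Fin.last n)))
      = Equiv.optionCongr w := by
    ext1 x
    simp [insertTop]
  rw [h, Equiv.removeNone_optionCongr]

lemma succAbove_val_lt_iff {n : ℕ} (p : Fin (n + 1)) (k : Fin n) :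
    (p.succAbove k : ℕ) < p ↔ (k : ℕ) < p :=
  Fin.succAbove_lt_iff_castSucc_lt p k

/-- The top value sits right of the split, hence cannot be the `3` of the pattern `3|12`. -/
lemma not_contains312_insertTop {n : ℕ} (p : Fin (n + 1)) (w : Equiv.Perm (Fin n))
    (hw : ¬ Contains312 n p w) : ¬ Contains312 (n + 1) p (insertTop p w) := by
  rintro ⟨i₁, i₂, i₃, h12, h23, h1, h2, hv23, hv31⟩
  -- The entries at `i₂` and `i₃` are not maximal, and `i₁` lies left of `p`.
  have n1 : i₁ ≠ p := by rintro rfl; exact lt_irrefl _ h1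
  have n2 : i₂ ≠ p := by
    rintro rfl; rw [insertTop_self] at hv23; exact (Fin.le_last _).not_gt hv23
  have n3 : i₃ ≠ p := by
    rintro rfl; rw [insertTop_self] at hv31; exact (Fin.le_last _).not_gt hv31
  obtain ⟨j₁, rfl⟩ := Fin.exists_succAbove_eq n1
  obtain ⟨j₂, rfl⟩ := Fin.exists_succAbove_eq n2
  obtain ⟨j₃, rfl⟩ := Fin.exists_succAbove_eq n3
  simp only [insertTop_succAbove, Fin.castSucc_lt_castSucc_iff, Fin.succAbove_lt_succAbove_iff]
    at h12 h23 hv23 hv31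
  rw [succAbove_val_lt_iff] at h1
  rw [← not_lt, succAbove_val_lt_iff, not_lt] at h2
  exact hw ⟨j₁, j₂, j₃, h12, h23, h1, h2, hv23, hv31⟩

/-- The top value sits right of the split, hence cannot be the `3` of the pattern `23|1`. -/
lemma not_contains231_insertTop {n : ℕ} (p : Fin (n + 1)) (w : Equiv.Perm (Fin n))
    (hw : ¬ Contains231 n p w) : ¬ Contains231 (n + 1) p (insertTop p w) := by
  rintro ⟨i₁, i₂, i₃, h12, h23, h2, h3, hv31, hv12⟩
  -- The entries at `i₁` and `i₃` are not maximal, and `i₂` lies left of `p`.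
  have n1 : i₁ ≠ p := by
    rintro rfl; rw [insertTop_self] at hv12; exact (Fin.le_last _).not_gt hv12
  have n2 : i₂ ≠ p := by rintro rfl; exact lt_irrefl _ h2
  have n3 : i₃ ≠ p := by
    rintro rfl; rw [insertTop_self] at hv31; exact (Fin.le_last _).not_gt hv31
  obtain ⟨j₁, rfl⟩ := Fin.exists_succAbove_eq n1
  obtain ⟨j₂, rfl⟩ := Fin.exists_succAbove_eq n2
  obtain ⟨j₃, rfl⟩ := Fin.exists_succAbove_eq n3
  simp only [insertTop_succAbove, Fin.castSucc_lt_castSucc_iff, Fin.succAbove_lt_succAbove_iff]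
    at h12 h23 hv31 hv12
  rw [succAbove_val_lt_iff] at h2
  rw [← not_lt, succAbove_val_lt_iff, not_lt] at h3
  exact hw ⟨j₁, j₂, j₃, h12, h23, h2, h3, hv31, hv12⟩

/-- Proposition 2.2 (surjectivity): for `0 ≤ r ≤ n`, the restriction of `φ` to
`K_R(r, n+1)` surjects onto `K(r, n)`. -/
theorem stmt4 (n r : ℕ) (hrn : r ≤ n) (w : Equiv.Perm (Fin n)) (hw : w ∈ splitK r n) :
    ∃ u ∈ splitKR r (n + 1), phiMap u = w := by
  obtain ⟨p, rfl⟩ : ∃ p : Fin (n + 1), (p : ℕ) = r := ⟨⟨r, Nat.lt_succ_of_le hrn⟩, rfl⟩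
  simp only [splitK, Finset.mem_filter, Finset.mem_univ, true_and] at hw
  refine ⟨insertTop p w, ?_, phiMap_insertTop p w⟩
  simp only [splitKR, splitK, Finset.mem_filter, Finset.mem_univ, true_and]
  exact ⟨⟨not_contains312_insertTop p w hw.1, not_contains231_insertTop p w hw.2⟩,
    p, le_rfl, by simp [insertTop_self]⟩
end

section
/- Let 1 ≤ r < n and 1 ≤ i ≤ r. The set S(i) := {w ∈ K_L(r,n) : i ∈ Right_r(w) and k ∈ Left_r(w) for all 1 ≤ k < i} has cardinality |S(i)| = C(n−i−1, r−i) · (r)_{i−1}, where C(a,b) denotes the binomial coefficient and (m)_i the falling factorial. -/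
/-!
The permutations being counted have a rigid shape. As `n` lies on the left, an ascent among the
values on the right would complete a `3|12`; so the right values decrease. As `i` lies on the right,
an ascent among the left values exceeding `i` would complete a `23|1`; so these decrease too.
Conversely these two conditions exclude both patterns, because `i` is the smallest value on the
right (`mem_iff_isShape`).

Such a permutation amounts to an arbitrary choice of two things: the `r - i` values strictly
between `i` and `n` that lie on the left, and an injective placement of the values `1, …, i - 1`
into the `r` left positions (`IsShape.eq_of`, `IsShape.card_left`, `exists_isShape`). The first can
be chosen in `C(n - i - 1, r - i)` ways and the second in `(r)_{i-1}` ways.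
-/


open scoped Classical

/-! ### Decreasing maps between finite sets -/

/-- A strictly decreasing function on a set is determined by the image of that set. -/
lemma strictAntiOn_eqOn_of_image {n : ℕ} {f g : Fin n → Fin n} {s : Set (Fin n)}
    (hf : StrictAntiOn f s) (hg : StrictAntiOn g s) (h : f '' s = g '' s) :
    ∀ x ∈ s, f x = g x := by
  have hf' : StrictAnti (fun x : s => f x) := fun a b hab => hf a.2 b.2 hab
  have hg' : StrictAnti (fun x : s => g x) := fun a b hab => hg a.2 b.2 hab
  have := (hf'.range_inj hg').1 (by
    rw [← Set.image_eq_range, ← Set.image_eq_range, h])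
  intro x hx
  exact congrFun this ⟨x, hx⟩

lemma exists_strictAntiOn_bijOn {n : ℕ} (s t : Finset (Fin n)) (h : s.card = t.card) :
    ∃ g : Fin n → Fin n, StrictAntiOn g s ∧ Set.BijOn g s t := by
  let a := s.orderIsoOfFin h
  let b := t.orderIsoOfFin rfl
  refine ⟨fun x => if hx : x ∈ s then b (Fin.rev (a.symm ⟨x, hx⟩)) else x, ?_, ?_, ?_, ?_⟩
  · intro x hx y hy hxy
    have hx' : x ∈ s := hx
    have hy' : y ∈ s := hy
    simp only [hx', hy', dif_pos]
    have : a.symm ⟨x, hx'⟩ < a.symm ⟨y, hy'⟩ := a.symm.strictMono hxy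
    exact b.strictMono (Fin.rev_lt_rev.2 this)
  · intro x hx
    have hx' : x ∈ s := hx
    simp [hx']
  · intro x hx y hy hxy
    have hx' : x ∈ s := hx
    have hy' : y ∈ s := hy
    simp only [hx', hy', dif_pos] at hxy
    have := a.symm.injective (Fin.rev_injective (b.injective (Subtype.ext hxy)))
    exact congrArg Subtype.val this
  · intro y hy
    have hy' : y ∈ t := hy
    refine ⟨a (Fin.rev (b.symm ⟨y, hy'⟩)), (a _).2, ?_⟩
    simp

/-! ### The shape forced by pattern avoidance -/

/-- The explicit shape of the permutations being counted, expressed through the position function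
`w.symm`; here `j` is the smallest value on the right (the value `i` of the statement, which is
`i - 1` in the zero-indexed `Fin n`) and `top` is the largest value. The values on the right
decrease from left to right, and so do the values on the left that exceed `j`. -/
structure IsShape {n : ℕ} (r : ℕ) (j top : Fin n) (w : Equiv.Perm (Fin n)) : Prop where
  small : ∀ v < j, (w.symm v : ℕ) < r
  mid : r ≤ (w.symm j : ℕ)
  top : (w.symm top : ℕ) < r
  antiR : StrictAntiOn w.symm {v | r ≤ (w.symm v : ℕ)}
  antiL : StrictAntiOn w.symm {v | j < v ∧ (w.symm v : ℕ) < r}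

/-- Pattern avoidance forces the shape: an ascent on the right together with the largest value on
the left would be a `3|12`, and an ascent on the left among values above `j` together with `j`
on the right would be a `23|1`. -/
lemma mem_iff_isShape {n r i : ℕ} (hi : 1 ≤ i) (hin : i < n) (w : Equiv.Perm (Fin n)) :
    (w ∈ (splitKL r n).filter fun w =>
        (∃ p : Fin n, r ≤ (p : ℕ) ∧ (w p : ℕ) + 1 = i) ∧
        ∀ m : ℕ, 1 ≤ m → m < i → ∃ p : Fin n, (p : ℕ) < r ∧ (w p : ℕ) + 1 = m) ↔
      IsShape r (⟨i - 1, by omega⟩ : Fin n) ⟨n - 1, by omega⟩ w := by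
  have key : ∀ (p v : Fin n), w p = v → p = w.symm v := fun p v h => by simp [← h]
  simp only [splitKL, splitK, Finset.mem_filter, Finset.mem_univ, true_and]
  constructor
  · rintro ⟨⟨⟨h1, h2⟩, q, hq, hqn⟩, ⟨p, hp, hpi⟩, hs⟩
    have hq' := key q ⟨n - 1, by omega⟩ (Fin.ext (by simp; omega))
    have hp' := key p ⟨i - 1, by omega⟩ (Fin.ext (by simp; omega))
    refine ⟨?_, ?_, ?_, ?_, ?_⟩
    · intro v hv
      have hv' : (v : ℕ) < i - 1 := hv
      obtain ⟨x, hx, hxv⟩ := hs (v + 1) (by omega) (by omega)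
      rw [← key x v (Fin.ext (by omega))]
      exact hx
    · rwa [← hp']
    · rwa [← hq']
    · intro a ha b hb hab
      by_contra hcon
      have ha' : r ≤ (w.symm a : ℕ) := ha
      have hlt : w.symm a < w.symm b :=
        lt_of_le_of_ne (not_lt.1 hcon) (fun h => hab.ne (w.symm.injective h))
      have hb' : r ≤ (w.symm b : ℕ) := hb
      refine h1 ⟨q, w.symm a, w.symm b, ?_, hlt, hq, ha', by simpa using hab, ?_⟩
      · rw [Fin.lt_def]; omega
      · rw [Equiv.apply_symm_apply, Fin.lt_def]
        have : b ≠ w q := by rintro rfl; simp at hb'; omega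
        have : (b : ℕ) ≠ w q := fun h => this (Fin.ext h)
        have := b.2
        omega
    · rintro a ⟨ha, ha'⟩ b ⟨hb, hb'⟩ hab
      by_contra hcon
      have hlt : w.symm a < w.symm b :=
        lt_of_le_of_ne (not_lt.1 hcon) (fun h => hab.ne (w.symm.injective h))
      refine h2 ⟨w.symm a, w.symm b, p, hlt, ?_, hb', hp, ?_, by simpa using hab⟩
      · rw [Fin.lt_def]; omega
      · rw [Equiv.apply_symm_apply, Fin.lt_def]
        have : i - 1 < (a : ℕ) := ha
        omega
  · intro h
    refine ⟨⟨⟨?_, ?_⟩, ⟨_, h.top, by simp; omega⟩⟩, ⟨_, h.mid, by simp; omega⟩, ?_⟩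
    · rintro ⟨a, b, c, -, hbc, -, hb, hwbc, -⟩
      have hc : r ≤ (c : ℕ) := hb.trans (Fin.le_def.1 hbc.le)
      have := h.antiR (a := w b) (by simpa using hb) (b := w c) (by simpa using hc) hwbc
      simp at this
      exact absurd hbc (not_lt.2 this.le)
    · rintro ⟨a, b, c, hab, -, hb, hc, hwca, hwab⟩
      -- A value on the right is at least `j`, since everything below `j` is on the left.
      have hj : (⟨i - 1, by omega⟩ : Fin n) ≤ w c := by
        by_contra hcon
        have := h.small (w c) (not_le.1 hcon)
        simp at this
        omega
      have ha : (a : ℕ) < r := (Fin.lt_def.1 hab).trans hb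
      have := h.antiL (a := w a) ⟨hj.trans_lt hwca, by simpa using ha⟩ (b := w b)
        ⟨hj.trans_lt (hwca.trans hwab), by simpa using hb⟩ hwab
      simp at this
      exact absurd hab (not_lt.2 this.le)
    · intro m hm hmi
      refine ⟨_, h.small ⟨m - 1, by omega⟩ ?_, by simp; omega⟩
      rw [Fin.lt_def]
      simp only
      omega

/-! ### The data determining a permutation of this shape -/

/-- A permutation of the given shape is determined by the set of values between `j` and `top`
that lie on the left and by the positions of the values below `j`: the two decreasing runs have
prescribed value sets and prescribed position sets. -/
lemma IsShape.eq_of {n r : ℕ} {j top : Fin n} (htop : ∀ v, v ≤ top)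
    {w w' : Equiv.Perm (Fin n)} (h : IsShape r j top w) (h' : IsShape r j top w')
    (hA : ∀ v, j < v → v < top → ((w.symm v : ℕ) < r ↔ (w'.symm v : ℕ) < r))
    (hf : ∀ v < j, w.symm v = w'.symm v) : w = w' := by
  have hL : ∀ v, (w.symm v : ℕ) < r ↔ (w'.symm v : ℕ) < r := by
    intro v
    rcases lt_trichotomy v j with hv | rfl | hv
    · exact iff_of_true (h.small v hv) (h'.small v hv)
    · exact iff_of_false (not_lt.2 h.mid) (not_lt.2 h'.mid)
    · rcases (htop v).lt_or_eq with hv' | rfl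
      · exact hA v hv hv'
      · exact iff_of_true h.top h'.top
  have hR : {v | r ≤ (w'.symm v : ℕ)} = {v | r ≤ (w.symm v : ℕ)} := by
    ext v; have := hL v; simp only [Set.mem_ofPred_eq]; omega
  have hL' : {v | j < v ∧ (w'.symm v : ℕ) < r} = {v | j < v ∧ (w.symm v : ℕ) < r} := by
    ext v; simp only [Set.mem_ofPred_eq, hL]
  have imR : ∀ u : Equiv.Perm (Fin n),
      u.symm '' {v | r ≤ (u.symm v : ℕ)} = {x : Fin n | r ≤ (x : ℕ)} := by
    intro u; ext x
    simp only [Set.mem_image, Set.mem_ofPred_eq]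
    exact ⟨by rintro ⟨v, hv, rfl⟩; exact hv, fun hx => ⟨u x, by simpa using hx, by simp⟩⟩
  have imL : ∀ u : Equiv.Perm (Fin n), IsShape r j top u →
      u.symm '' {v | j < v ∧ (u.symm v : ℕ) < r} =
        {x : Fin n | (x : ℕ) < r ∧ ∀ v < j, u.symm v ≠ x} := by
    intro u hu; ext x
    simp only [Set.mem_image, Set.mem_ofPred_eq]
    constructor
    · rintro ⟨v, ⟨hv, hvr⟩, rfl⟩
      exact ⟨hvr, fun y hy hyv => absurd (u.symm.injective hyv ▸ hy) hv.not_gt⟩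
    · rintro ⟨hx, hne⟩
      refine ⟨u x, ⟨?_, by simpa using hx⟩, by simp⟩
      rcases lt_trichotomy j (u x) with h1 | h1 | h1
      · exact h1
      · have := hu.mid
        rw [h1] at this
        simp at this
        omega
      · exact absurd (by simp) (hne _ h1)
  have eR := strictAntiOn_eqOn_of_image h.antiR (hR ▸ h'.antiR)
    (by rw [imR w, ← hR, imR w'])
  have eL := strictAntiOn_eqOn_of_image h.antiL (hL' ▸ h'.antiL)
    (by
      rw [imL w h, ← hL', imL w' h']
      ext x
      simp only [Set.mem_ofPred_eq]
      refine and_congr_right fun _ => forall_congr' fun v => forall_congr' fun hv => ?_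
      rw [hf v hv])
  have : w.symm = w'.symm := by
    ext v
    congr 1
    by_cases hv : (w.symm v : ℕ) < r
    · rcases lt_trichotomy v j with h1 | rfl | h1
      · exact hf v h1
      · exact absurd h.mid (not_le.2 hv)
      · exact eL v ⟨h1, hv⟩
    · exact eR v (not_lt.1 hv)
  rw [← Equiv.symm_symm w, this, Equiv.symm_symm]

/-- In a permutation of the given shape, the left values are those below `j` (there are `j` of
them), `top`, and the chosen values between `j` and `top`. -/
lemma IsShape.card_left {n r : ℕ} (hrn : r < n) {j top : Fin n} (htop : ∀ v, v ≤ top)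
    {w : Equiv.Perm (Fin n)} (h : IsShape r j top w) :
    ((Finset.Ioo j top).filter fun v => (w.symm v : ℕ) < r).card = r - (j + 1) := by
  have hjt : j < top := lt_of_le_of_ne (htop j) (by rintro rfl; exact absurd h.mid (not_le.2 h.top))
  have hc : (Finset.univ.filter fun v => (w.symm v : ℕ) < r).card = r := by
    have : (Finset.univ.filter fun v : Fin n => (v : ℕ) < r).card = r := by
      rw [Fin.card_filter_val_lt]; omega
    refine (Finset.card_equiv w.symm fun v => ?_).trans this
    simp
  have hs : (Finset.univ.filter fun v => (w.symm v : ℕ) < r) =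
      Finset.Iio j ∪
        insert top ((Finset.Ioo j top).filter fun v => (w.symm v : ℕ) < r) := by
    ext v
    simp only [Finset.mem_filter, Finset.mem_univ, true_and, Finset.mem_union, Finset.mem_Iio,
      Finset.mem_insert, Finset.mem_Ioo]
    constructor
    · intro hv
      rcases lt_trichotomy v j with h1 | rfl | h1
      · exact Or.inl h1
      · exact absurd h.mid (not_le.2 hv)
      · rcases (htop v).lt_or_eq with h2 | h2
        · exact Or.inr (Or.inr ⟨⟨h1, h2⟩, hv⟩)
        · exact Or.inr (Or.inl h2)
    · rintro (h1 | rfl | h1)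
      · exact h.small v h1
      · exact h.top
      · exact h1.2
  rw [hs, Finset.card_union_of_disjoint, Finset.card_insert_of_notMem, Fin.card_Iio] at hc
  · omega
  · simp
  · rw [Finset.disjoint_left]
    intro v hv
    simp only [Finset.mem_Iio] at hv
    simp only [Finset.mem_insert, Finset.mem_filter, Finset.mem_Ioo]
    rintro (rfl | h1)
    · exact absurd hjt hv.not_gt
    · exact absurd h1.1.1 hv.not_gt

/-- Every choice of data is realised: the values below `j` are placed by `f`, and the two remaining
blocks of values are placed decreasingly into the remaining positions on each side. -/
lemma exists_isShape {n r : ℕ} (hrn : r < n) {j top : Fin n} (hjr : (j : ℕ) < r)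
    (hjt : j < top) (A : Finset (Fin n))
    (hA : A ⊆ Finset.Ioo j top) (hAc : A.card = r - (j + 1)) (f : Fin j ↪ Fin r) :
    ∃ w : Equiv.Perm (Fin n), IsShape r j top w ∧
      ((Finset.Ioo j top).filter fun v => (w.symm v : ℕ) < r) = A ∧
      ∀ k : Fin j, (w.symm (k.castLE j.2.le) : ℕ) = f k := by
  have hA' : ∀ v ∈ A, j < v ∧ v < top := fun v hv => Finset.mem_Ioo.1 (hA hv)
  let L := insert top A
  have hLj : ∀ v ∈ L, j < v := by
    intro v hv
    rcases Finset.mem_insert.1 hv with rfl | hv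
    · exact hjt
    · exact (hA' v hv).1
  have hLc : L.card = r - j := by
    rw [Finset.card_insert_of_notMem fun h => (hA' _ h).2.false]
    omega
  let F : Finset (Fin n) := Finset.univ.map (f.trans (Fin.castLEEmb hrn.le))
  have hFr : ∀ x ∈ F, (x : ℕ) < r := by
    intro x hx
    obtain ⟨k, -, rfl⟩ := Finset.mem_map.1 hx
    simp
  let Q : Finset (Fin n) := Finset.univ.filter fun x : Fin n => (x : ℕ) < r
  have hQc : Q.card = r := by
    simp only [Q]; rw [Fin.card_filter_val_lt]; omega
  have hFQ : F ⊆ Q := fun x hx => by simpa [Q] using hFr x hx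
  have hFc : F.card = j := by simp [F]
  have hPc : (Q \ F).card = r - j := by rw [Finset.card_sdiff_of_subset hFQ, hQc, hFc]
  have hdis : Disjoint (Finset.Iio j) L := by
    rw [Finset.disjoint_left]
    intro v hv hv'
    exact (Finset.mem_Iio.1 hv).not_gt (hLj v hv')
  obtain ⟨g, hg, hgb⟩ := exists_strictAntiOn_bijOn L (Q \ F) (hLc.trans hPc.symm)
  obtain ⟨q, hq, hqb⟩ := exists_strictAntiOn_bijOn (Finset.Iio j ∪ L)ᶜ Qᶜ (by
    rw [Finset.card_compl, Finset.card_compl, Finset.card_union_of_disjoint hdis, hLc, hQc,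
      Fin.card_Iio]
    omega)
  let u : Fin n → Fin n := fun v =>
    if h : v < j then Fin.castLE hrn.le (f ⟨v, h⟩) else if v ∈ L then g v else q v
  have u1 : ∀ v (h : v < j), u v = Fin.castLE hrn.le (f ⟨v, h⟩) := fun v h => by simp [u, h]
  have u2 : ∀ v ∈ L, u v = g v := fun v h => by simp [u, h, (hLj v h).not_gt]
  have u3 : ∀ v, ¬ v < j → v ∉ L → u v = q v := fun v h h' => by simp [u, h, h']
  have m1 : ∀ v, v < j → u v ∈ F := fun v h => by
    rw [u1 v h]; exact Finset.mem_map.2 ⟨⟨v, h⟩, Finset.mem_univ _, rfl⟩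
  have m2 : ∀ v ∈ L, u v ∈ Q ∧ u v ∉ F := fun v h => by
    rw [u2 v h]; exact Finset.mem_sdiff.1 (hgb.mapsTo h)
  have c3 : ∀ v, ¬ v < j → v ∉ L → v ∈ (((Finset.Iio j ∪ L)ᶜ : Finset (Fin n)) : Set (Fin n)) :=
    fun v h h' => by simp only [Finset.mem_coe, Finset.mem_compl, Finset.mem_union,
      Finset.mem_Iio, not_or]; exact ⟨h, h'⟩
  have m3 : ∀ v, ¬ v < j → v ∉ L → u v ∉ Q := fun v h h' => by
    rw [u3 v h h']
    exact Finset.mem_compl.1 (hqb.mapsTo (c3 v h h'))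
  have memQ : ∀ v, u v ∈ Q ↔ v < j ∨ v ∈ L := fun v => by
    constructor
    · intro h
      by_contra hcon
      rw [not_or] at hcon
      exact m3 v hcon.1 hcon.2 h
    · rintro (h | h)
      · exact hFQ (m1 v h)
      · exact (m2 v h).1
  have memF : ∀ v, u v ∈ F ↔ v < j := fun v => by
    refine ⟨fun h => ?_, m1 v⟩
    rcases (memQ v).1 (hFQ h) with h' | h'
    · exact h'
    · exact absurd h (m2 v h').2
  have hu : Function.Injective u := by
    intro a b hab
    by_cases ha : a < j
    · have hb : b < j := (memF b).1 (hab ▸ (memF a).2 ha)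
      rw [u1 a ha, u1 b hb] at hab
      have := f.injective (Fin.castLE_injective _ hab)
      exact Fin.ext (by simpa using this)
    · have hb : ¬ b < j := fun hb => ha ((memF a).1 (hab ▸ (memF b).2 hb))
      by_cases ha' : a ∈ L
      · have hb' : b ∈ L := ((memQ b).1 (hab ▸ (memQ a).2 (Or.inr ha'))).resolve_left hb
        rw [u2 a ha', u2 b hb'] at hab
        exact hgb.injOn ha' hb' hab
      · have hb' : b ∉ L := fun hb' =>
          ((memQ a).1 (hab ▸ (memQ b).2 (Or.inr hb'))).elim ha ha'
        rw [u3 a ha ha', u3 b hb hb'] at hab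
        exact hqb.injOn (c3 a ha ha') (c3 b hb hb') hab
  let w : Equiv.Perm (Fin n) := (Equiv.ofBijective u (Finite.injective_iff_bijective.1 hu)).symm
  have hw : ∀ v, w.symm v = u v := fun v => rfl
  have hlt : ∀ v, (w.symm v : ℕ) < r ↔ v < j ∨ v ∈ L := fun v => by
    rw [hw, ← memQ]; simp [Q]
  refine ⟨w, ⟨?_, ?_, ?_, ?_, ?_⟩, ?_, ?_⟩
  · exact fun v hv => (hlt v).2 (Or.inl hv)
  · rw [← not_lt, hlt]
    rintro (h | h)
    · exact h.false
    · exact (hLj _ h).false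
  · exact (hlt _).2 (Or.inr (Finset.mem_insert_self _ _))
  · intro a ha b hb hab
    simp only [Set.mem_ofPred_eq, ← not_lt (b := r), hlt, not_or] at ha hb
    rw [hw, hw, u3 a ha.1 ha.2, u3 b hb.1 hb.2]
    exact hq (c3 a ha.1 ha.2) (c3 b hb.1 hb.2) hab
  · rintro a ⟨ha, ha'⟩ b ⟨hb, hb'⟩ hab
    have ha := ((hlt a).1 ha').resolve_left ha.not_gt
    have hb := ((hlt b).1 hb').resolve_left hb.not_gt
    rw [hw, hw, u2 a ha, u2 b hb]
    exact hg ha hb hab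
  · ext v
    simp only [Finset.mem_filter, hlt, Finset.mem_Ioo, L, Finset.mem_insert]
    constructor
    · rintro ⟨⟨h1, h2⟩, h3 | h3 | h3⟩
      · exact absurd h1 h3.not_gt
      · exact absurd h3 h2.ne
      · exact h3
    · exact fun h => ⟨hA' v h, Or.inr (Or.inr h)⟩
  · intro k
    rw [hw, u1 _ (by rw [Fin.lt_def]; exact k.2)]
    rfl

/-! ### The count -/

/-- For `1 ≤ r < n` and `1 ≤ i ≤ r`, the set
`S(i) = {w ∈ K_L(r,n) : i ∈ Right_r(w) and k ∈ Left_r(w) for all 1 ≤ k < i}`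
has cardinality `C(n-i-1, r-i) · (r)_{i-1}`. -/
theorem stmt10 (n r i : ℕ) (hr : 1 ≤ r) (hrn : r < n) (hi : 1 ≤ i) (hir : i ≤ r) :
    ((splitKL r n).filter fun w =>
        (∃ p : Fin n, r ≤ (p : ℕ) ∧ (w p : ℕ) + 1 = i) ∧
        ∀ m : ℕ, 1 ≤ m → m < i → ∃ p : Fin n, (p : ℕ) < r ∧ (w p : ℕ) + 1 = m).card =
      Nat.choose (n - i - 1) (r - i) * Nat.descFactorial r (i - 1) := by
  have hmem := fun w => mem_iff_isShape (r := r) hi (hir.trans_lt hrn) w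
  set j : Fin n := ⟨i - 1, by omega⟩ with hj
  set top : Fin n := ⟨n - 1, by omega⟩ with ht
  have htop : ∀ v : Fin n, v ≤ top := fun v => by
    rw [Fin.le_def]; have := v.2; simp only [ht]; omega
  have hjt : j < top := by rw [Fin.lt_def]; simp only [hj, ht]; omega
  have hjv : (j : ℕ) = i - 1 := rfl
  have hcard : (Finset.powersetCard (r - i) (Finset.Ioo j top) ×ˢ
      (Finset.univ : Finset (Fin j ↪ Fin r))).card =
      Nat.choose (n - i - 1) (r - i) * Nat.descFactorial r (i - 1) := by
    rw [Finset.card_product, Finset.card_powersetCard, Finset.card_univ,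
      Fintype.card_embedding_eq, Fintype.card_fin, Fintype.card_fin, Fin.card_Ioo]
    have : (top : ℕ) - j - 1 = n - i - 1 := by simp only [hj, ht]; omega
    rw [this]
  rw [← hcard]
  refine Finset.card_bij
    (fun w hw => ((Finset.Ioo j top).filter fun v => (w.symm v : ℕ) < r,
      ⟨fun k => ⟨w.symm (k.castLE j.2.le), ((hmem w).1 hw).small _ (by
        rw [Fin.lt_def]; exact k.2)⟩, fun a b hab => ?_⟩)) ?_ ?_ ?_
  · have := w.symm.injective (Fin.ext (Fin.mk.inj hab))
    exact Fin.castLE_injective _ this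
  · intro w hw
    have := ((hmem w).1 hw).card_left hrn htop
    simp only [Finset.mem_product, Finset.mem_powersetCard, Finset.mem_univ, and_true]
    exact ⟨Finset.filter_subset _ _, by rw [this]; omega⟩
  · intro w hw w' hw' heq
    obtain ⟨h1, h2⟩ := Prod.mk.inj heq
    refine ((hmem w).1 hw).eq_of htop ((hmem w').1 hw') (fun v hv hv' => ?_) fun v hv => ?_
    · have := Finset.ext_iff.1 h1 v
      simpa [hv, hv'] using this
    · have := congrArg Fin.val (DFunLike.congr_fun h2 ⟨v, hv⟩)
      exact Fin.ext this
  · rintro ⟨A, f⟩ hAf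
    simp only [Finset.mem_product, Finset.mem_powersetCard, Finset.mem_univ, and_true] at hAf
    obtain ⟨w, hw, hwA, hwf⟩ := exists_isShape hrn (j := j) (top := top) (by omega) hjt A hAf.1
      (by rw [hAf.2]; omega) f
    refine ⟨w, (hmem w).2 hw, Prod.ext hwA ?_⟩
    ext k
    exact hwf k
end

section
/- The rational numbers a(r,s) := k(r, r+s)/(r!·s!) − 1 satisfy the recursion a(r,s) = a(r, s−1) + a(r−1, s) − a(r−1, s−1) + C(r+s−2, r−1)/(r!·s!) for all r, s ≥ 1, together with the initial conditions a(r,0) = 0 and a(0,s) = 0 for all r, s ≥ 0, where C(a,b) denotes the binomial coefficient. -/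
/-!
Write `w` as a left word (positions `< r`) followed by a right word (positions `≥ r`). If the top
value lies in the right word it takes part in no occurrence of `3|12` or `23|1`, so deleting it
gives a bijection from the members of `K(r, n + 1)` with the top value at a prescribed right
position onto `K(r, n)`. Likewise, deleting the bottom value from a prescribed left position is a
bijection onto `K(r - 1, n)`. If neither happens, then the top value is on the left and the bottom
value on the right, and avoidance forces both words to be decreasing; such a permutation starts
with the top value and ends with the bottom value, and deleting these two leaves an arbitrary
permutation that is decreasing on both sides, of which there are `C(r + s - 2, r - 1)`
by Pascal's rule. Inclusion-exclusion (`splitk_rec`) yields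
`k(r, r+s) + r s k(r-1, r+s-2) = s k(r, r+s-1) + r k(r-1, r+s-1) + C(r+s-2, r-1)`,
and dividing by `r! s!` gives the recursion for `a(r, s)`.
-/

open scoped Classical

/-! ### Inserting a value at a position -/

/-- The permutation of `Fin (n + 1)` taking `p` to `v` and order isomorphic to `w` on the other
positions and values; this inverts the deletion of the value `v` from position `p`. -/
def ins {n : ℕ} (p v : Fin (n + 1)) (w : Equiv.Perm (Fin n)) : Equiv.Perm (Fin (n + 1)) :=
  (finSuccEquiv' p).trans ((Equiv.optionCongr w).trans (finSuccEquiv' v).symm)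

@[simp] lemma ins_self {n : ℕ} (p v : Fin (n + 1)) (w : Equiv.Perm (Fin n)) :
    ins p v w p = v := by
  simp [ins]

@[simp] lemma ins_succAbove {n : ℕ} (p v : Fin (n + 1)) (w : Equiv.Perm (Fin n)) (i : Fin n) :
    ins p v w (p.succAbove i) = v.succAbove (w i) := by
  simp [ins]

lemma ins_injective {n : ℕ} (p v : Fin (n + 1)) : Function.Injective (ins p v) := by
  intro w w' h
  ext i
  have := congrArg (fun e => e (p.succAbove i)) h
  simp only [ins_succAbove] at this
  rw [Fin.succAbove_right_injective this]

lemma exists_ins {n : ℕ} (p v : Fin (n + 1)) (w : Equiv.Perm (Fin (n + 1))) (h : w p = v) :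
    ∃ w', ins p v w' = w := by
  set e := (finSuccEquiv' p).symm.trans (w.trans (finSuccEquiv' v)) with he
  have h0 : e none = none := by simp [he, h]
  refine ⟨Equiv.removeNone e, Equiv.ext fun x => ?_⟩
  rcases eq_or_ne x p with rfl | hx
  · rw [ins_self, h]
  · obtain ⟨i, rfl⟩ := Fin.exists_succAbove_eq hx
    have h1 : ∃ y, e (some i) = some y :=
      Option.ne_none_iff_exists'.1 fun h' => by simpa using e.injective (h'.trans h0.symm)
    rw [ins_succAbove, ← finSuccEquiv'_symm_some, Equiv.removeNone_some e h1]
    simp [he]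

/-- The number of permutations of `Fin n` satisfying `P`. -/
noncomputable def cnt {n : ℕ} (P : Equiv.Perm (Fin n) → Prop) : ℕ :=
  (Finset.univ.filter P).card

lemma cnt_congr {n : ℕ} {P Q : Equiv.Perm (Fin n) → Prop} (h : ∀ w, P w ↔ Q w) :
    cnt P = cnt Q := by
  rw [show P = Q from funext fun w => propext (h w)]

lemma cnt_split {n : ℕ} (Q P : Equiv.Perm (Fin n) → Prop) :
    cnt P = cnt (fun w => Q w ∧ P w) + cnt (fun w => ¬ Q w ∧ P w) := by
  unfold cnt
  rw [← Finset.card_filter_add_card_filter_not (s := Finset.univ.filter P) Q]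
  simp only [Finset.filter_filter, and_comm]
  congr!

lemma cnt_at {n : ℕ} (p v : Fin (n + 1)) (P : Equiv.Perm (Fin (n + 1)) → Prop) :
    cnt (fun w => w p = v ∧ P w) = cnt (fun w => P (ins p v w)) := by
  symm
  refine Finset.card_bij (fun w _ => ins p v w) ?_ ?_ ?_
  · intro w hw
    simpa using hw
  · intro w _ w' _ h
    exact ins_injective p v h
  · intro w hw
    simp only [Finset.mem_filter, Finset.mem_univ, true_and] at hw
    obtain ⟨w', rfl⟩ := exists_ins p v w hw.1
    exact ⟨w', by simpa using hw.2, rfl⟩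

lemma cnt_exists {n c m : ℕ} (v : Fin (n + 1)) (Q : Fin (n + 1) → Prop) [DecidablePred Q]
    (P : Equiv.Perm (Fin (n + 1)) → Prop) (hm : (Finset.univ.filter Q).card = m)
    (h : ∀ p, Q p → cnt (fun w => P (ins p v w)) = c) :
    cnt (fun w => (∃ p, Q p ∧ w p = v) ∧ P w) = m * c := by
  have hU : cnt (fun w => (∃ p, Q p ∧ w p = v) ∧ P w) =
      ((Finset.univ.filter Q).biUnion
        fun p => Finset.univ.filter fun w => w p = v ∧ P w).card := by
    unfold cnt
    congr 1
    ext w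
    simp only [Finset.mem_filter, Finset.mem_univ, true_and, Finset.mem_biUnion]
    grind
  rw [hU, ← hm, Finset.card_biUnion]
  · refine Finset.sum_const_nat fun p hp => ?_
    rw [← h p (by simpa using hp), ← cnt_at]
    unfold cnt
    congr!
  · intro p _ q _ hpq
    rw [Function.onFun, Finset.disjoint_left]
    intro w hw hw'
    simp only [Finset.mem_filter, Finset.mem_univ, true_and] at hw hw'
    exact hpq (w.injective (hw.1.trans hw'.1.symm))

/-! ### Deleting an inessential extreme value -/

/-- Membership in `K(r, n)` as a predicate. -/
def Avoids (r : ℕ) {n : ℕ} (w : Equiv.Perm (Fin n)) : Prop :=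
  ¬ Contains312 n r w ∧ ¬ Contains231 n r w

lemma splitk_eq_cnt (r n : ℕ) : splitk r n = cnt (fun w : Equiv.Perm (Fin n) => Avoids r w) := by
  unfold splitk splitK cnt Avoids
  congr!

/-- The hypothesis `hpv` puts the inserted value where it cannot take part in a pattern: the top
value on the right or the bottom value on the left. -/
lemma avoids_ins {n r r' : ℕ} (p v : Fin (n + 1)) (w : Equiv.Perm (Fin n))
    (hr : ∀ i, ((p.succAbove i : Fin (n + 1)) : ℕ) < r ↔ (i : ℕ) < r')
    (hpv : (r ≤ p ∧ v = Fin.last n) ∨ ((p : ℕ) < r ∧ v = 0)) :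
    Avoids r (ins p v w) ↔ Avoids r' w := by
  have hr2 : ∀ i, r ≤ ((p.succAbove i : Fin (n + 1)) : ℕ) ↔ r' ≤ (i : ℕ) := fun i => by
    have := hr i
    omega
  unfold Avoids
  refine and_congr (not_congr ⟨?_, ?_⟩) (not_congr ⟨?_, ?_⟩)
  · rintro ⟨i, j, k, hij, hjk, h1, h2, h3, h4⟩
    have hi : i ≠ p := by
      rintro rfl
      simp only [ins_self] at h4
      rcases hpv with ⟨h, -⟩ | ⟨-, rfl⟩
      · omega
      · exact absurd h4 (Fin.not_lt_zero _)
    have hj : j ≠ p := by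
      rintro rfl
      simp only [ins_self] at h3
      rcases hpv with ⟨-, rfl⟩ | ⟨h, -⟩
      · exact absurd h3 (Fin.le_last _).not_gt
      · omega
    have hk : k ≠ p := by
      rintro rfl
      simp only [ins_self] at h4
      rcases hpv with ⟨-, rfl⟩ | ⟨h, -⟩
      · exact absurd h4 (Fin.le_last _).not_gt
      · have : (j : ℕ) < k := hjk
        omega
    obtain ⟨i, rfl⟩ := Fin.exists_succAbove_eq hi
    obtain ⟨j, rfl⟩ := Fin.exists_succAbove_eq hj
    obtain ⟨k, rfl⟩ := Fin.exists_succAbove_eq hk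
    simp only [ins_succAbove, Fin.succAbove_lt_succAbove_iff, hr, hr2] at *
    exact ⟨i, j, k, hij, hjk, h1, h2, h3, h4⟩
  · rintro ⟨i, j, k, h⟩
    exact ⟨p.succAbove i, p.succAbove j, p.succAbove k, by
      simpa only [ins_succAbove, Fin.succAbove_lt_succAbove_iff, hr, hr2] using h⟩
  · rintro ⟨i, j, k, hij, hjk, h1, h2, h3, h4⟩
    have hi : i ≠ p := by
      rintro rfl
      simp only [ins_self] at h3
      rcases hpv with ⟨h, -⟩ | ⟨-, rfl⟩
      · have : (i : ℕ) < j := hij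
        omega
      · exact absurd h3 (Fin.not_lt_zero _)
    have hj : j ≠ p := by
      rintro rfl
      simp only [ins_self] at h4
      rcases hpv with ⟨h, -⟩ | ⟨-, rfl⟩
      · omega
      · exact absurd h4 (Fin.not_lt_zero _)
    have hk : k ≠ p := by
      rintro rfl
      simp only [ins_self] at h3
      rcases hpv with ⟨-, rfl⟩ | ⟨h, -⟩
      · exact absurd h3 (Fin.le_last _).not_gt
      · omega
    obtain ⟨i, rfl⟩ := Fin.exists_succAbove_eq hi
    obtain ⟨j, rfl⟩ := Fin.exists_succAbove_eq hj
    obtain ⟨k, rfl⟩ := Fin.exists_succAbove_eq hk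
    simp only [ins_succAbove, Fin.succAbove_lt_succAbove_iff, hr, hr2] at *
    exact ⟨i, j, k, hij, hjk, h1, h2, h3, h4⟩
  · rintro ⟨i, j, k, h⟩
    exact ⟨p.succAbove i, p.succAbove j, p.succAbove k, by
      simpa only [ins_succAbove, Fin.succAbove_lt_succAbove_iff, hr, hr2] using h⟩

lemma succAbove_lt_of_le {n r : ℕ} {p : Fin (n + 1)} (h : r ≤ p) (i : Fin n) :
    ((p.succAbove i : Fin (n + 1)) : ℕ) < r ↔ (i : ℕ) < r := by
  simp only [Fin.succAbove, Fin.lt_def]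
  split_ifs <;> simp at * <;> omega

lemma succAbove_lt_of_lt {n r : ℕ} {p : Fin (n + 1)} (h : (p : ℕ) < r + 1) (i : Fin n) :
    ((p.succAbove i : Fin (n + 1)) : ℕ) < r + 1 ↔ (i : ℕ) < r := by
  simp only [Fin.succAbove, Fin.lt_def]
  split_ifs <;> simp at * <;> omega

/-- Some position on the right carries the top value. -/
def TopRight (r : ℕ) {n : ℕ} (w : Equiv.Perm (Fin (n + 1))) : Prop :=
  ∃ p : Fin (n + 1), r ≤ (p : ℕ) ∧ w p = Fin.last n

/-- Some position on the left carries the bottom value. -/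
def BotLeft (r : ℕ) {n : ℕ} (w : Equiv.Perm (Fin (n + 1))) : Prop :=
  ∃ p : Fin (n + 1), (p : ℕ) < r ∧ w p = 0

lemma card_right {n r s : ℕ} (h : n = r + s) :
    (Finset.univ.filter fun p : Fin (n + 1) => r ≤ (p : ℕ)).card = s + 1 := by
  have h1 := Finset.card_filter_add_card_filter_not (s := Finset.univ)
    fun p : Fin (n + 1) => (p : ℕ) < r
  simp only [not_lt, Finset.card_univ, Fintype.card_fin] at h1
  have h2 := Fin.card_filter_val_lt (n := n + 1) (m := r)
  omega

lemma card_left {n r : ℕ} (h : r ≤ n) :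
    (Finset.univ.filter fun p : Fin (n + 1) => (p : ℕ) < r + 1).card = r + 1 := by
  have h1 := Fin.card_filter_val_lt (n := n + 1) (m := r + 1)
  omega

lemma cnt_topRight {n r s : ℕ} (h : n = r + s) :
    cnt (fun w : Equiv.Perm (Fin (n + 1)) => TopRight r w ∧ Avoids r w) =
      (s + 1) * splitk r n := by
  rw [splitk_eq_cnt]
  exact cnt_exists (Fin.last n) (fun p => r ≤ (p : ℕ)) (Avoids r) (card_right h)
    fun p hp => cnt_congr fun w =>
      avoids_ins p _ w (succAbove_lt_of_le hp) (Or.inl ⟨hp, rfl⟩)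

lemma cnt_botLeft {n r : ℕ} (h : r ≤ n) :
    cnt (fun w : Equiv.Perm (Fin (n + 1)) => BotLeft (r + 1) w ∧ Avoids (r + 1) w) =
      (r + 1) * splitk r n := by
  rw [splitk_eq_cnt]
  exact cnt_exists 0 (fun p : Fin (n + 1) => (p : ℕ) < r + 1) (Avoids (r + 1)) (card_left h)
    fun p hp => cnt_congr fun w =>
      avoids_ins p _ w (succAbove_lt_of_lt hp) (Or.inr ⟨hp, rfl⟩)

lemma botLeft_ins {n r : ℕ} (p : Fin (n + 2)) (hp : r ≤ p) (w : Equiv.Perm (Fin (n + 1))) :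
    BotLeft r (ins p (Fin.last (n + 1)) w) ↔ BotLeft r w := by
  have h0 : (0 : Fin (n + 2)) = (Fin.last (n + 1)).succAbove 0 := by simp
  constructor
  · rintro ⟨q, hq, h⟩
    have hqp : q ≠ p := by
      rintro rfl
      omega
    obtain ⟨q, rfl⟩ := Fin.exists_succAbove_eq hqp
    rw [ins_succAbove, h0] at h
    exact ⟨q, (succAbove_lt_of_le hp q).1 hq, Fin.succAbove_right_injective h⟩
  · rintro ⟨q, hq, h⟩
    exact ⟨p.succAbove q, (succAbove_lt_of_le hp q).2 hq, by rw [ins_succAbove, h, ← h0]⟩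

lemma cnt_topRight_botLeft (a b : ℕ) :
    cnt (fun w : Equiv.Perm (Fin (a + b + 1 + 1)) =>
        TopRight (a + 1) w ∧ BotLeft (a + 1) w ∧ Avoids (a + 1) w) =
      (b + 1) * ((a + 1) * splitk a (a + b)) := by
  rw [← cnt_botLeft (by omega : a ≤ a + b)]
  exact cnt_exists (Fin.last _) (fun p => a + 1 ≤ (p : ℕ))
    (fun w => BotLeft (a + 1) w ∧ Avoids (a + 1) w) (card_right (by ring))
    fun p hp => cnt_congr fun w => and_congr (botLeft_ins p hp w)
      (avoids_ins p _ w (succAbove_lt_of_le hp) (Or.inl ⟨hp, rfl⟩))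

/-! ### Permutations decreasing on both sides -/

/-- Both the first `r` entries of `w` and the remaining ones are decreasing. -/
def Decr (r : ℕ) {n : ℕ} (w : Equiv.Perm (Fin n)) : Prop :=
  ∀ i j : Fin n, i < j → ((j : ℕ) < r ∨ r ≤ (i : ℕ)) → w j < w i

/-- The hypothesis `hpv` puts the top value at the start of a word, or the bottom value at the
very end. -/
lemma decr_ins {n r r' : ℕ} (p v : Fin (n + 1)) (w : Equiv.Perm (Fin n))
    (hr : ∀ i, ((p.succAbove i : Fin (n + 1)) : ℕ) < r ↔ (i : ℕ) < r')
    (hpv : (((p : ℕ) = 0 ∨ (p : ℕ) = r) ∧ v = Fin.last n) ∨ (p = Fin.last n ∧ v = 0)) :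
    Decr r (ins p v w) ↔ Decr r' w := by
  have hr2 : ∀ i, r ≤ ((p.succAbove i : Fin (n + 1)) : ℕ) ↔ r' ≤ (i : ℕ) := fun i => by
    have := hr i
    omega
  constructor
  · intro h i j hij hs
    have := h (p.succAbove i) (p.succAbove j)
    simp only [ins_succAbove, Fin.succAbove_lt_succAbove_iff, hr, hr2] at this
    exact this hij hs
  · intro h i j hij hs
    have hij' : (i : ℕ) < j := hij
    by_cases hi : i = p
    · subst hi
      obtain ⟨j, rfl⟩ := Fin.exists_succAbove_eq hij.ne'
      rcases hpv with ⟨-, rfl⟩ | ⟨rfl, -⟩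
      · rw [ins_self, ins_succAbove]
        exact Fin.lt_last_iff_ne_last.2 (Fin.succAbove_ne _ _)
      · exact absurd hij (Fin.le_last _).not_gt
    obtain ⟨i, rfl⟩ := Fin.exists_succAbove_eq hi
    by_cases hj : j = p
    · subst hj
      rcases hpv with ⟨h0, -⟩ | ⟨-, rfl⟩
      · omega
      · rw [ins_self, ins_succAbove]
        exact Fin.pos_iff_ne_zero.2 (Fin.succAbove_ne _ _)
    obtain ⟨j, rfl⟩ := Fin.exists_succAbove_eq hj
    simp only [ins_succAbove, Fin.succAbove_lt_succAbove_iff, hr, hr2] at *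
    exact h i j hij hs

lemma Decr.eq_of_top {n r : ℕ} {w : Equiv.Perm (Fin (n + 1))} (h : Decr r w) {p : Fin (n + 1)}
    (hp : w p = Fin.last n) : (p : ℕ) = 0 ∨ (p : ℕ) = r := by
  by_contra! hc
  have := h ⟨(p : ℕ) - 1, by omega⟩ p (by rw [Fin.lt_def]; simp only; omega) (by simp only; omega)
  rw [hp] at this
  exact absurd this (Fin.le_last _).not_gt

lemma Decr.eq_last_of_bot {n r : ℕ} {w : Equiv.Perm (Fin (n + 1))} (h : Decr r w)
    {p : Fin (n + 1)} (hr : r ≤ p) (hp : w p = 0) : p = Fin.last n := by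
  by_contra hc
  have := h p (Fin.last n) (Fin.lt_last_iff_ne_last.2 hc) (Or.inr hr)
  rw [hp] at this
  exact absurd this (Fin.not_lt_zero _)

/-- The members of `Decr r` with the top value at position `p`, the start of a word. -/
lemma cnt_decr_at {n r r' : ℕ} (p : Fin (n + 1))
    (hr : ∀ i, ((p.succAbove i : Fin (n + 1)) : ℕ) < r ↔ (i : ℕ) < r')
    (hp : (p : ℕ) = 0 ∨ (p : ℕ) = r) :
    cnt (fun w : Equiv.Perm (Fin (n + 1)) => w p = Fin.last n ∧ Decr r w) =
      cnt (fun w : Equiv.Perm (Fin n) => Decr r' w) := by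
  rw [cnt_at]
  exact cnt_congr fun w => decr_ins p _ w hr (Or.inl ⟨hp, rfl⟩)

/-- If one of the two words is empty, only the decreasing permutation qualifies. -/
lemma cnt_decr_trivial (n r : ℕ) (h : r = 0 ∨ r = n) :
    cnt (fun w : Equiv.Perm (Fin n) => Decr r w) = 1 := by
  induction n generalizing r with
  | zero =>
    unfold cnt
    rw [Finset.filter_true_of_mem fun w _ i => i.elim0]
    simp
  | succ n ih =>
    have h0 : ∀ w : Equiv.Perm (Fin (n + 1)), Decr r w → w 0 = Fin.last n := by
      intro w hw
      have h1 := hw.eq_of_top (w.apply_symm_apply (Fin.last n))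
      have h2 : w.symm (Fin.last n) = 0 := by
        rw [Fin.ext_iff]
        have := (w.symm (Fin.last n)).isLt
        rw [Fin.val_zero]
        omega
      rw [← h2, Equiv.apply_symm_apply]
    rw [cnt_congr fun w => (and_iff_right_of_imp (h0 w)).symm]
    rcases h with rfl | rfl
    · rw [cnt_decr_at 0 (r' := 0) (by simp) (by simp), ih 0 (Or.inl rfl)]
    · rw [cnt_decr_at 0 (r' := n) (succAbove_lt_of_lt (by simp)) (by simp), ih n (Or.inr rfl)]

/-- Pascal's rule: the top value starts either the left or the right word. -/
lemma cnt_decr (n r : ℕ) (hr : r ≤ n) :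
    cnt (fun w : Equiv.Perm (Fin n) => Decr r w) = n.choose r := by
  induction n generalizing r with
  | zero =>
    obtain rfl : r = 0 := by omega
    rw [cnt_decr_trivial 0 0 (Or.inl rfl), Nat.choose_self]
  | succ n ih =>
    rcases Nat.eq_zero_or_pos r with rfl | hr0
    · rw [cnt_decr_trivial _ 0 (Or.inl rfl), Nat.choose_zero_right]
    rcases hr.eq_or_lt with rfl | hlt
    · rw [cnt_decr_trivial _ _ (Or.inr rfl), Nat.choose_self]
    obtain ⟨r, rfl⟩ : ∃ t, r = t + 1 := ⟨r - 1, by omega⟩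
    rw [cnt_split (fun w => w 0 = Fin.last n), Nat.choose_succ_succ, ← ih r (by omega),
      ← ih (r + 1) (by omega),
      cnt_decr_at 0 (r' := r) (succAbove_lt_of_lt (by simp)) (by simp),
      ← cnt_decr_at ⟨r + 1, by omega⟩ (r := r + 1) (succAbove_lt_of_le le_rfl) (Or.inr rfl)]
    congr 1
    refine cnt_congr fun w => and_congr_left fun hw => ⟨fun h => ?_, fun h h' => ?_⟩
    · have h1 := hw.eq_of_top (w.apply_symm_apply (Fin.last n))
      have h2 : w.symm (Fin.last n) ≠ 0 := by
        intro h2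
        rw [← h2, Equiv.apply_symm_apply] at h
        exact h rfl
      have h3 : w.symm (Fin.last n) = ⟨r + 1, by omega⟩ := by
        rw [Fin.ext_iff]
        exact h1.resolve_left fun h4 => h2 (Fin.ext h4)
      rw [← h3, Equiv.apply_symm_apply]
    · have := congrArg Fin.val (w.injective (h.trans h'.symm))
      simp at this

/-- With the top value on the left and the bottom value on the right, avoidance means that both
words are decreasing. -/
lemma neither_iff (a b : ℕ) (w : Equiv.Perm (Fin (a + b + 1 + 1))) :
    (¬ BotLeft (a + 1) w ∧ ¬ TopRight (a + 1) w ∧ Avoids (a + 1) w) ↔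
      w 0 = Fin.last _ ∧ w (Fin.last _) = 0 ∧ Decr (a + 1) w := by
  constructor
  · rintro ⟨hB, hT, h312, h231⟩
    obtain ⟨p, hp⟩ := w.surjective (Fin.last _)
    obtain ⟨q, hq⟩ := w.surjective 0
    have hpr : (p : ℕ) < a + 1 := by
      by_contra hc
      exact hT ⟨p, by omega, hp⟩
    have hqr : a + 1 ≤ (q : ℕ) := by
      by_contra hc
      exact hB ⟨q, by omega, hq⟩
    have hD : Decr (a + 1) w := by
      intro i j hij hs
      by_contra hc
      have hlt : w i < w j := lt_of_le_of_ne (not_lt.1 hc) (w.injective.ne hij.ne)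
      have hij' : (i : ℕ) < j := hij
      rcases hs with hs | hs
      · have hiq : i ≠ q := by
          rintro rfl
          omega
        refine h231 ⟨i, j, q, hij, ?_, hs, hqr, ?_, hlt⟩
        · rw [Fin.lt_def]; omega
        · rw [hq, Fin.pos_iff_ne_zero, ← hq]
          exact w.injective.ne hiq
      · have hjp : j ≠ p := by
          rintro rfl
          omega
        refine h312 ⟨p, i, j, ?_, hij, hpr, hs, hlt, ?_⟩
        · rw [Fin.lt_def]; omega
        · rw [hp, Fin.lt_last_iff_ne_last, ← hp]
          exact w.injective.ne hjp
    have h0 : p = 0 := Fin.ext <| (hD.eq_of_top hp).resolve_right (by omega)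
    have hl : q = Fin.last _ := hD.eq_last_of_bot hqr hq
    exact ⟨h0 ▸ hp, hl ▸ hq, hD⟩
  · rintro ⟨h0, hl, hD⟩
    refine ⟨?_, ?_, ?_, ?_⟩
    · rintro ⟨p, hp, h⟩
      have := congrArg Fin.val (w.injective (h.trans hl.symm))
      rw [Fin.val_last] at this
      omega
    · rintro ⟨p, hp, h⟩
      have := congrArg Fin.val (w.injective (h.trans h0.symm))
      rw [Fin.val_zero] at this
      omega
    · rintro ⟨i, j, k, -, hjk, -, h2, h3, -⟩
      exact lt_asymm h3 (hD j k hjk (Or.inr h2))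
    · rintro ⟨i, j, k, hij, -, h1, -, -, h4⟩
      exact lt_asymm h4 (hD i j hij (Or.inl h1))

lemma cnt_neither (a b : ℕ) :
    cnt (fun w : Equiv.Perm (Fin (a + b + 1 + 1)) =>
        ¬ BotLeft (a + 1) w ∧ ¬ TopRight (a + 1) w ∧ Avoids (a + 1) w) =
      (a + b).choose a := by
  rw [cnt_congr (neither_iff a b), cnt_at, ← cnt_decr (a + b) a (by omega)]
  have h1 : ∀ w : Equiv.Perm (Fin (a + b + 1)),
      (ins 0 (Fin.last _) w (Fin.last _) = 0 ∧ Decr (a + 1) (ins 0 (Fin.last _) w)) ↔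
        (w (Fin.last _) = 0 ∧ Decr a w) := by
    intro w
    refine and_congr ?_ (decr_ins 0 _ w (succAbove_lt_of_lt (by simp)) (by simp))
    rw [show Fin.last (a + b + 1) = (0 : Fin (a + b + 1 + 1)).succAbove (Fin.last (a + b)) by simp,
      ins_succAbove]
    simp
  rw [cnt_congr h1, cnt_at]
  exact cnt_congr fun w =>
    decr_ins _ _ w (succAbove_lt_of_le (by simp)) (Or.inr ⟨rfl, rfl⟩)

/-! ### The recursion -/

lemma splitk_rec (a b : ℕ) :
    splitk (a + 1) (a + b + 1 + 1) + (b + 1) * ((a + 1) * splitk a (a + b)) =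
      (b + 1) * splitk (a + 1) (a + b + 1) + (a + 1) * splitk a (a + b + 1) +
        (a + b).choose a := by
  have hT := cnt_topRight (n := a + b + 1) (r := a + 1) (s := b) (by ring)
  have hB := cnt_botLeft (n := a + b + 1) (r := a) (by omega)
  have hTB := cnt_topRight_botLeft a b
  have hN := cnt_neither a b
  have s1 := cnt_split (n := a + b + 1 + 1) (TopRight (a + 1)) (Avoids (a + 1))
  have s2 := cnt_split (n := a + b + 1 + 1) (TopRight (a + 1))
    (fun w => BotLeft (a + 1) w ∧ Avoids (a + 1) w)
  have s3 := cnt_split (n := a + b + 1 + 1) (BotLeft (a + 1))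
    (fun w => ¬ TopRight (a + 1) w ∧ Avoids (a + 1) w)
  rw [cnt_congr fun w => and_left_comm (a := BotLeft (a + 1) w)] at s3
  rw [splitk_eq_cnt (a + 1) (a + b + 1 + 1)]
  change cnt (Avoids (a + 1)) + _ = _
  omega

lemma splitk_eq_factorial (r n : ℕ) (h : r = 0 ∨ r = n) : splitk r n = n.factorial := by
  unfold splitk splitK
  rw [Finset.filter_true_of_mem, Finset.card_univ, Fintype.card_perm, Fintype.card_fin]
  intro w _
  constructor
  · rintro ⟨i, j, k, -, -, h1, h2, -⟩
    omega
  · rintro ⟨i, j, k, -, -, h1, h2, -⟩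
    omega

/-- Lemma 3.1: the numbers `a(r,s)` satisfy the recursion
`a(r,s) = a(r,s-1) + a(r-1,s) - a(r-1,s-1) + C(r+s-2, r-1)/(r!·s!)` for `r,s ≥ 1`,
with initial conditions `a(r,0) = a(0,s) = 0`. -/
theorem stmt12 :
    (∀ r s : ℕ, 1 ≤ r → 1 ≤ s →
      aRat r s = aRat r (s - 1) + aRat (r - 1) s - aRat (r - 1) (s - 1) +
        (Nat.choose (r + s - 2) (r - 1) : ℚ) /
          ((Nat.factorial r : ℚ) * (Nat.factorial s : ℚ))) ∧
    (∀ r : ℕ, aRat r 0 = 0) ∧ (∀ s : ℕ, aRat 0 s = 0) := by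
  refine ⟨?_, ?_, ?_⟩
  · intro r s hr hs
    obtain ⟨a, rfl⟩ : ∃ a, r = a + 1 := ⟨r - 1, by omega⟩
    obtain ⟨b, rfl⟩ : ∃ b, s = b + 1 := ⟨s - 1, by omega⟩
    have h := congrArg (Nat.cast : ℕ → ℚ) (splitk_rec a b)
    push_cast at h
    have e1 : a + 1 + (b + 1) - 2 = a + b := by omega
    have e2 : a + 1 + (b + 1) = a + b + 1 + 1 := by omega
    have e3 : a + 1 + b = a + b + 1 := by omega
    have ha : (a.factorial : ℚ) ≠ 0 := by exact_mod_cast a.factorial_ne_zero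
    have hb : (b.factorial : ℚ) ≠ 0 := by exact_mod_cast b.factorial_ne_zero
    have ha' : (a : ℚ) + 1 ≠ 0 := by positivity
    have hb' : (b : ℚ) + 1 ≠ 0 := by positivity
    unfold aRat
    rw [e1, e2, Nat.add_sub_cancel, Nat.add_sub_cancel, e3, ← add_assoc a b 1, Nat.factorial_succ, Nat.factorial_succ,
      eq_sub_of_add_eq h]
    push_cast
    field_simp
    ring
  · intro r
    have : (r.factorial : ℚ) ≠ 0 := by exact_mod_cast r.factorial_ne_zero
    rw [aRat, splitk_eq_factorial r (r + 0) (Or.inr rfl)]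
    simp [this]
  · intro s
    have : (s.factorial : ℚ) ≠ 0 := by exact_mod_cast s.factorial_ne_zero
    rw [aRat, splitk_eq_factorial 0 _ (Or.inl rfl)]
    simp [this]
end

section
/- For all real numbers x and y, ∑_{(r,s) ∈ ℕ×ℕ} C(r+s, r) · xʳ·yˢ/(r!·s!) = e^{x+y} · ∑_{m=0}^{∞} (x·y)^m/(m!)², where C(a,b) denotes the binomial coefficient and the sums are absolutely convergent (tsum over ℕ×ℕ and over ℕ respectively). -/
/-!
Both sides are the sum of one absolutely convergent triple series. Multiplying out the right-hand
side gives `∑ xⁱ/i! · yʲ/j! · (xy)ᵐ/(m!)²`. Substituting `r = i + m`, `s = j + m` turns the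
general term into `C(r,m) C(s,m) xʳ yˢ/(r! s!)`, which vanishes unless `m ≤ min r s`. Summing over
`m` first, Vandermonde's identity `∑ₘ C(r,m) C(s,m) = C(r+s,r)` gives the left-hand side.
-/

open scoped Classical

theorem sum_choose_mul_choose (r s : ℕ) :
    ∑ m ∈ Finset.range (r + 1), r.choose m * s.choose m = (r + s).choose r := by
  rw [Nat.add_comm r s, Nat.add_choose_eq, Finset.Nat.sum_antidiagonal_eq_sum_range_succ_mk]
  refine Finset.sum_congr rfl fun m hm => ?_
  have h : m ≤ r := Nat.lt_succ_iff.mp (Finset.mem_range.mp hm)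
  rw [Nat.choose_symm h, Nat.mul_comm]

theorem hasSum_pow_div_factorial (x : ℝ) :
    HasSum (fun n : ℕ => x ^ n / (Nat.factorial n : ℝ)) (Real.exp x) := by
  rw [Real.exp_eq_exp_ℝ]
  exact NormedSpace.expSeries_div_hasSum_exp x

theorem summable_norm_pow_div_factorial (x : ℝ) :
    Summable (fun n : ℕ => ‖x ^ n / (Nat.factorial n : ℝ)‖) :=
  NormedSpace.norm_expSeries_div_summable x

theorem summable_norm_pow_div_factorial_sq (z : ℝ) :
    Summable (fun m : ℕ => ‖z ^ m / (Nat.factorial m : ℝ) ^ 2‖) := by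
  refine Summable.of_nonneg_of_le (fun _ => norm_nonneg _) (fun m => ?_)
    (summable_norm_pow_div_factorial z)
  have h1 : (1 : ℝ) ≤ Nat.factorial m := by exact_mod_cast Nat.factorial_pos m
  rw [norm_div, norm_div, norm_pow (Nat.factorial m : ℝ),
    Real.norm_of_nonneg (by linarith : (0 : ℝ) ≤ Nat.factorial m)]
  gcongr
  nlinarith

/-- The general term `C(r,m) C(s,m) xʳ yˢ/(r! s!)` of the triple series, indexed by
`((r, s), m)`; all `m` are allowed, the term being zero for `m > min r s`. -/
noncomputable def tripleTerm (x y : ℝ) (p : (ℕ × ℕ) × ℕ) : ℝ :=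
  ((p.1.1.choose p.2 * p.1.2.choose p.2 : ℕ) : ℝ) *
    (x ^ p.1.1 * y ^ p.1.2 / ((Nat.factorial p.1.1 : ℝ) * (Nat.factorial p.1.2 : ℝ)))

theorem tripleTerm_shift (x y : ℝ) (i j m : ℕ) :
    tripleTerm x y ((i + m, j + m), m) =
      x ^ i / (Nat.factorial i : ℝ) * (y ^ j / (Nat.factorial j : ℝ)) *
        ((x * y) ^ m / (Nat.factorial m : ℝ) ^ 2) := by
  have hf : ∀ n : ℕ, (Nat.factorial n : ℝ) ≠ 0 := fun n => by
    exact_mod_cast Nat.factorial_ne_zero n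
  have hc : ∀ k : ℕ, ((k + m).choose m : ℝ) =
      (Nat.factorial (k + m) : ℝ) / ((Nat.factorial k : ℝ) * (Nat.factorial m : ℝ)) := fun k => by
    rw [Nat.add_comm k m, Nat.cast_add_choose, mul_comm]
  have h1 := hf (i + m)
  have h2 := hf (j + m)
  have h3 := hf i
  have h4 := hf j
  have h5 := hf m
  simp only [tripleTerm, Nat.cast_mul, hc]
  field_simp
  ring

/-- The change of indices `((i, j), m) ↦ ((i + m, j + m), m)`. -/
def shiftMap (p : (ℕ × ℕ) × ℕ) : (ℕ × ℕ) × ℕ := ((p.1.1 + p.2, p.1.2 + p.2), p.2)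

theorem shiftMap_injective : Function.Injective shiftMap := by
  rintro ⟨⟨i, j⟩, m⟩ ⟨⟨i', j'⟩, m'⟩ h
  simp only [shiftMap, Prod.mk.injEq] at h ⊢
  omega

/-- Off the range of `shiftMap` one has `r < m` or `s < m`, so a binomial factor vanishes. -/
theorem tripleTerm_eq_zero (x y : ℝ) (p : (ℕ × ℕ) × ℕ) (hp : p ∉ Set.range shiftMap) :
    tripleTerm x y p = 0 := by
  obtain ⟨⟨r, s⟩, m⟩ := p
  by_cases hr : r < m
  · simp [tripleTerm, Nat.choose_eq_zero_of_lt hr]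
  by_cases hs : s < m
  · simp [tripleTerm, Nat.choose_eq_zero_of_lt hs]
  refine absurd ⟨((r - m, s - m), m), ?_⟩ hp
  simp [shiftMap, Nat.sub_add_cancel (not_lt.mp hr), Nat.sub_add_cancel (not_lt.mp hs)]

theorem hasSum_mul_mul {f g h : ℕ → ℝ} {a b c : ℝ}
    (hf : HasSum f a) (hg : HasSum g b) (hh : HasSum h c)
    (hf' : Summable fun n => ‖f n‖) (hg' : Summable fun n => ‖g n‖)
    (hh' : Summable fun n => ‖h n‖) :
    HasSum (fun p : (ℕ × ℕ) × ℕ => f p.1.1 * g p.1.2 * h p.2) (a * b * c) := by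
  have hfg : HasSum (fun p : ℕ × ℕ => f p.1 * g p.2) (a * b) :=
    hf.mul hg (summable_mul_of_summable_norm hf' hg')
  have hfg' : Summable fun p : ℕ × ℕ => ‖f p.1 * g p.2‖ := hf'.mul_norm hg'
  exact hfg.mul hh (summable_mul_of_summable_norm hfg' hh')

theorem hasSum_tripleTerm_comp_shiftMap (x y : ℝ) :
    HasSum (tripleTerm x y ∘ shiftMap)
      (Real.exp x * Real.exp y * ∑' m : ℕ, (x * y) ^ m / (Nat.factorial m : ℝ) ^ 2) := by
  have hfun : tripleTerm x y ∘ shiftMap = fun p : (ℕ × ℕ) × ℕ =>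
      x ^ p.1.1 / (Nat.factorial p.1.1 : ℝ) * (y ^ p.1.2 / (Nat.factorial p.1.2 : ℝ)) *
        ((x * y) ^ p.2 / (Nat.factorial p.2 : ℝ) ^ 2) :=
    funext fun p => tripleTerm_shift x y p.1.1 p.1.2 p.2
  rw [hfun]
  have h := hasSum_mul_mul (hasSum_pow_div_factorial x) (hasSum_pow_div_factorial y)
    (summable_norm_pow_div_factorial_sq (x * y)).of_norm.hasSum
    (summable_norm_pow_div_factorial x) (summable_norm_pow_div_factorial y)
    (summable_norm_pow_div_factorial_sq (x * y))
  exact h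

theorem hasSum_tripleTerm (x y : ℝ) :
    HasSum (tripleTerm x y)
      (Real.exp x * Real.exp y * ∑' m : ℕ, (x * y) ^ m / (Nat.factorial m : ℝ) ^ 2) :=
  (shiftMap_injective.hasSum_iff (tripleTerm_eq_zero x y)).mp
    (hasSum_tripleTerm_comp_shiftMap x y)

/-- Summing over `m` with `r`, `s` fixed gives the left-hand term, by Vandermonde's identity. -/
theorem hasSum_tripleTerm_fiber (x y : ℝ) (p : ℕ × ℕ) :
    HasSum (fun m => tripleTerm x y (p, m))
      ((Nat.choose (p.1 + p.2) p.1 : ℝ) * x ^ p.1 * y ^ p.2 /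
        ((Nat.factorial p.1 : ℝ) * (Nat.factorial p.2 : ℝ))) := by
  have h : HasSum (fun m => tripleTerm x y (p, m))
      (∑ m ∈ Finset.range (p.1 + 1), tripleTerm x y (p, m)) := by
    refine hasSum_sum_of_ne_finset_zero fun m hm => ?_
    have hlt : p.1 < m := by simpa [Nat.lt_succ_iff] using hm
    simp [tripleTerm, Nat.choose_eq_zero_of_lt hlt]
  convert h using 1
  simp only [tripleTerm]
  rw [← Finset.sum_mul, ← Nat.cast_sum, sum_choose_mul_choose]
  ring

/-- Proposition 3.2 (power-series form): for all real `x, y`, both families are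
(absolutely) summable and
`∑_{r,s} C(r+s, r) xʳyˢ/(r!·s!) = e^{x+y} · ∑_m (xy)^m/(m!)²`. -/
theorem stmt13 (x y : ℝ) :
    Summable (fun p : ℕ × ℕ => (Nat.choose (p.1 + p.2) p.1 : ℝ) * x ^ p.1 * y ^ p.2 /
      ((Nat.factorial p.1 : ℝ) * (Nat.factorial p.2 : ℝ))) ∧
    Summable (fun m : ℕ => (x * y) ^ m / (Nat.factorial m : ℝ) ^ 2) ∧
    ∑' p : ℕ × ℕ, (Nat.choose (p.1 + p.2) p.1 : ℝ) * x ^ p.1 * y ^ p.2 /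
        ((Nat.factorial p.1 : ℝ) * (Nat.factorial p.2 : ℝ)) =
      Real.exp (x + y) * ∑' m : ℕ, (x * y) ^ m / (Nat.factorial m : ℝ) ^ 2 := by
  have h := hasSum_tripleTerm x y
  have h' := h.prod_fiberwise (hasSum_tripleTerm_fiber x y)
  refine ⟨h'.summable, (summable_norm_pow_div_factorial_sq (x * y)).of_norm, ?_⟩
  rw [Real.exp_add]
  exact h'.tsum_eq
end

section
/- For all real numbers x ≥ 0 and y ≥ 0, ∑_{(r,s) ∈ ℕ×ℕ} C(r+s, r) · xʳ·yˢ/(r!·s!) = e^{x+y} · (1/π) ∫_0^π e^{2√(xy)·cos θ} dθ, where C(a,b) denotes the binomial coefficient and the left-hand sum is a tsum over ℕ×ℕ. -/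
/-!
By Vandermonde's identity `C(r+s, r) = ∑ₖ C(r,k) C(s,k)`, the double series is a triple series of
nonnegative terms. Summing over `(r, s)` first, with `∑ᵣ C(r,k) xʳ/r! = eˣ xᵏ/k!`, turns it into
`e^{x+y} ∑ₖ (xy)ᵏ/k!²`. On the other side, expanding the exponential in
`∫₀^π e^{2√(xy) cos θ} dθ` and integrating termwise with the Wallis integrals of `cosⁿ` over `[0, π]`
leaves only the even terms, which are `π (xy)ᵏ/k!²`.
-/

open scoped Classical

/-- The series of `eˣ` differentiated `k` times, multiplied by `xᵏ/k!`. -/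
lemma hasSum_choose_mul_pow_div_factorial (x : ℝ) (k : ℕ) :
    HasSum (fun r : ℕ => (r.choose k : ℝ) * x ^ r / (r.factorial : ℝ))
      (Real.exp x * (x ^ k / (k.factorial : ℝ))) := by
  have hinj : Function.Injective (fun a : ℕ => a + k) := add_left_injective k
  rw [← hinj.hasSum_iff]
  · have h := (NormedSpace.expSeries_div_hasSum_exp (𝔸 := ℝ) x).mul_right
      (x ^ k / (k.factorial : ℝ))
    rw [← Real.exp_eq_exp_ℝ] at h
    convert! h using 2 with a
    have h1 := Nat.add_choose_mul_factorial_mul_factorial a k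
    have h2 : ((a + k).choose k : ℝ) * a.factorial * k.factorial = (a + k).factorial := by
      exact_mod_cast h1
    have ha : (a.factorial : ℝ) ≠ 0 := by positivity
    have hk : (k.factorial : ℝ) ≠ 0 := by positivity
    have hak : ((a + k).factorial : ℝ) ≠ 0 := by positivity
    simp only [Function.comp]
    field_simp
    rw [← h2]
    ring
  · intro r hr
    have : r < k := by
      by_contra hlt
      exact hr ⟨r - k, by simp only; omega⟩
    simp [Nat.choose_eq_zero_of_lt this]

/-- Vandermonde's identity in the symmetric form `C(r+s, r) = ∑ₖ C(r,k) C(s,k)`, as a series that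
terminates because `C(r,k) = 0` for `k > r`. -/
lemma hasSum_choose_mul_choose (r s : ℕ) :
    HasSum (fun k : ℕ => (r.choose k : ℝ) * (s.choose k : ℝ)) ((r + s).choose r : ℝ) := by
  have h : ((r + s).choose r : ℝ) =
      ∑ k ∈ Finset.range (r + 1), (r.choose k : ℝ) * (s.choose k : ℝ) := by
    rw [add_comm r s, Nat.add_choose_eq, Finset.Nat.sum_antidiagonal_eq_sum_range_succ_mk]
    push_cast
    refine Finset.sum_congr rfl fun k hk => ?_
    rw [Nat.choose_symm (by simpa [Nat.lt_succ_iff] using hk), mul_comm]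
  rw [h]
  refine hasSum_sum_of_ne_finset_zero fun k hk => ?_
  rw [Nat.choose_eq_zero_of_lt (by simpa using hk)]
  simp

/-- The double series, evaluated by interchanging the sum over `(r, s)` with the Vandermonde sum
over `k`; all terms are nonnegative, so convergence of the iterated sum allows this. -/
lemma tsum_choose_mul_pow (x y : ℝ) (hx : 0 ≤ x) (hy : 0 ≤ y)
    (hS : Summable fun k : ℕ => (x * y) ^ k / (k.factorial : ℝ) ^ 2) :
    ∑' p : ℕ × ℕ, (Nat.choose (p.1 + p.2) p.1 : ℝ) * x ^ p.1 * y ^ p.2 /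
        ((Nat.factorial p.1 : ℝ) * (Nat.factorial p.2 : ℝ)) =
      Real.exp (x + y) * ∑' k : ℕ, (x * y) ^ k / (k.factorial : ℝ) ^ 2 := by
  let G : ℕ → ℕ × ℕ → ℝ := fun k p =>
    ((p.1.choose k : ℝ) * x ^ p.1 / (p.1.factorial : ℝ)) *
      ((p.2.choose k : ℝ) * y ^ p.2 / (p.2.factorial : ℝ))
  have hrow : ∀ k, HasSum (G k) (Real.exp (x + y) * ((x * y) ^ k / (k.factorial : ℝ) ^ 2)) := by
    intro k
    have h1 := hasSum_choose_mul_pow_div_factorial x k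
    have h2 := hasSum_choose_mul_pow_div_factorial y k
    have h := h1.mul h2 (h1.summable.mul_of_nonneg h2.summable
      (fun r => by positivity) (fun s => by positivity))
    convert! h using 1
    rw [Real.exp_add, mul_pow]
    field_simp
  have hG : Summable (Function.uncurry G) := by
    rw [summable_prod_of_nonneg (fun q => by
      simp only [Function.uncurry, G, Pi.zero_apply]; positivity)]
    refine ⟨fun k => (hrow k).summable, ?_⟩
    simp only [Function.uncurry, (hrow _).tsum_eq]
    exact hS.mul_left _
  have hcol : ∀ p : ℕ × ℕ, ∑' k, G k p = (Nat.choose (p.1 + p.2) p.1 : ℝ) * x ^ p.1 * y ^ p.2 /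
        ((Nat.factorial p.1 : ℝ) * (Nat.factorial p.2 : ℝ)) := by
    intro p
    have h := (hasSum_choose_mul_choose p.1 p.2).mul_right
      (x ^ p.1 * y ^ p.2 / ((Nat.factorial p.1 : ℝ) * (Nat.factorial p.2 : ℝ)))
    rw [mul_assoc, mul_div_assoc, ← h.tsum_eq]
    refine tsum_congr fun k => ?_
    simp only [G]
    field_simp
  calc _ = ∑' p, ∑' k, G k p := tsum_congr fun p => (hcol p).symm
    _ = ∑' k, ∑' p, G k p := Summable.tsum_comm hG
    _ = _ := by simp only [(hrow _).tsum_eq, tsum_mul_left]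

lemma integral_cos_pow_add_two (n : ℕ) :
    ∫ θ in (0 : ℝ)..Real.pi, Real.cos θ ^ (n + 2) =
      (n + 1) / (n + 2) * ∫ θ in (0 : ℝ)..Real.pi, Real.cos θ ^ n := by
  rw [integral_cos_pow]
  simp

lemma integral_cos_pow_odd_zero_pi (m : ℕ) :
    ∫ θ in (0 : ℝ)..Real.pi, Real.cos θ ^ (2 * m + 1) = 0 := by
  induction m with
  | zero => simp
  | succ m ih =>
    rw [show 2 * (m + 1) + 1 = 2 * m + 1 + 2 by ring, integral_cos_pow_add_two, ih, mul_zero]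

lemma integral_cos_pow_even_zero_pi (m : ℕ) :
    ∫ θ in (0 : ℝ)..Real.pi, Real.cos θ ^ (2 * m) =
      Real.pi * ((2 * m).factorial : ℝ) / (4 ^ m * (m.factorial : ℝ) ^ 2) := by
  induction m with
  | zero => simp
  | succ m ih =>
    rw [show 2 * (m + 1) = 2 * m + 2 by ring, integral_cos_pow_add_two, ih]
    simp only [Nat.factorial_succ]
    push_cast
    field_simp
    ring

/-- Termwise integration of the exponential series, dominated on `[0, π]` by `∑ |z|ⁿ/n!`. -/
lemma hasSum_integral_exp_mul_cos (z : ℝ) :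
    HasSum (fun n : ℕ => z ^ n / (n.factorial : ℝ) * ∫ θ in (0 : ℝ)..Real.pi, Real.cos θ ^ n)
      (∫ θ in (0 : ℝ)..Real.pi, Real.exp (z * Real.cos θ)) := by
  have h : HasSum
      (fun n : ℕ => ∫ θ in (0 : ℝ)..Real.pi, z ^ n / (n.factorial : ℝ) * Real.cos θ ^ n)
      (∫ θ in (0 : ℝ)..Real.pi, Real.exp (z * Real.cos θ)) := by
    refine intervalIntegral.hasSum_integral_of_dominated_convergence
      (fun n _ => |z| ^ n / (n.factorial : ℝ)) ?_ ?_ ?_ ?_ ?_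
    · intro n
      exact (by fun_prop : Continuous fun θ : ℝ =>
        z ^ n / (n.factorial : ℝ) * Real.cos θ ^ n).aestronglyMeasurable
    · intro n
      refine Filter.Eventually.of_forall fun θ _ => ?_
      rw [norm_mul, norm_div, norm_pow, norm_pow, Real.norm_eq_abs, Real.norm_eq_abs,
        Real.norm_eq_abs, Nat.abs_cast]
      exact mul_le_of_le_one_right (by positivity)
        (pow_le_one₀ (abs_nonneg _) (Real.abs_cos_le_one θ))
    · exact Filter.Eventually.of_forall fun θ _ => Real.summable_pow_div_factorial |z|
    · exact intervalIntegrable_const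
    · refine Filter.Eventually.of_forall fun θ _ => ?_
      have h := NormedSpace.expSeries_div_hasSum_exp (𝔸 := ℝ) (z * Real.cos θ)
      rw [← Real.exp_eq_exp_ℝ] at h
      convert! h using 2 with n
      rw [mul_pow]
      ring
  simpa only [intervalIntegral.integral_const_mul] using h

/-- The power series of the Bessel function, `π I₀(2√t) = π ∑ₖ tᵏ/k!²`; the odd powers of `2√t`
drop out because the odd powers of the cosine integrate to `0`. -/
lemma hasSum_bessel (t : ℝ) (ht : 0 ≤ t) :
    HasSum (fun k : ℕ => Real.pi * (t ^ k / (k.factorial : ℝ) ^ 2))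
      (∫ θ in (0 : ℝ)..Real.pi, Real.exp (2 * Real.sqrt t * Real.cos θ)) := by
  have hinj : Function.Injective (fun k : ℕ => 2 * k) := fun a b h => by simpa using h
  have h := hasSum_integral_exp_mul_cos (2 * Real.sqrt t)
  rw [← hinj.hasSum_iff] at h
  · convert h using 2 with k
    simp only [Function.comp]
    rw [integral_cos_pow_even_zero_pi, pow_mul, mul_pow, Real.sq_sqrt ht, mul_pow]
    norm_num
    field_simp
  · intro n hn
    obtain ⟨m, rfl | rfl⟩ := Nat.even_or_odd' n
    · exact absurd ⟨m, rfl⟩ hn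
    · rw [integral_cos_pow_odd_zero_pi, mul_zero]

/-- Proposition 3.2 (integral form): for `x, y ≥ 0`,
`∑_{r,s} C(r+s, r) xʳyˢ/(r!·s!) = e^{x+y} · (1/π)∫₀^π e^{2√(xy)cos θ} dθ`. -/
theorem stmt14 (x y : ℝ) (hx : 0 ≤ x) (hy : 0 ≤ y) :
    ∑' p : ℕ × ℕ, (Nat.choose (p.1 + p.2) p.1 : ℝ) * x ^ p.1 * y ^ p.2 /
        ((Nat.factorial p.1 : ℝ) * (Nat.factorial p.2 : ℝ)) =
      Real.exp (x + y) * ((1 / Real.pi) *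
        ∫ θ in (0 : ℝ)..Real.pi, Real.exp (2 * Real.sqrt (x * y) * Real.cos θ)) := by
  have h := hasSum_bessel (x * y) (mul_nonneg hx hy)
  have hS := (summable_mul_left_iff Real.pi_ne_zero).1 h.summable
  rw [tsum_choose_mul_pow x y hx hy hS, ← h.tsum_eq, tsum_mul_left, one_div,
    inv_mul_cancel_left₀ Real.pi_ne_zero]
end

section
/- For every real number x, e^{2x} · ∑_{m=0}^{∞} x^{2m}/(m!)² = ∑_{m=0}^{∞} C(2m, m) · x^m/m!, where C(2m,m) is the central binomial coefficient; that is, the exponential generating function of the central binomial coefficients equals e^{2x}·I₀(2x). -/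
/-!
Comparing coefficients of `x ^ n / n!`, the claim is
`C(2n, n) = ∑_{j + m = n} C(n, j) 2 ^ j c(m)`, where `c(m) = [X ^ m] (1 + X²) ^ m` is `C(m, m/2)` for
even `m` and `0` for odd `m`. This is the coefficient of `X ^ n` in
`(1 + X) ^ (2n) = (2X + (1 + X²)) ^ n`, expanded by the binomial theorem
(`centralBinom_eq_sum_evenCoeff`). The analytic part is the Cauchy product of `exp (2x)` with the
series `∑ c(m) x ^ m / m!`, which is the Bessel series padded with zeros at odd exponents
(`hasSum_evenCoeff`).
-/

open scoped Classical

/-- The coefficient of `X ^ m` in `(1 + X²) ^ m`. Equivalently, `evenCoeff m / m!` is the coefficient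
of `x ^ m` in `I₀(2x)`. -/
def evenCoeff (m : ℕ) : ℕ := if 2 ∣ m then m.choose (m / 2) else 0

lemma coeff_one_add_X_sq_pow (m : ℕ) :
    (((1 + Polynomial.X ^ 2 : Polynomial ℕ)) ^ m).coeff m = evenCoeff m := by
  have h : ((1 + Polynomial.X ^ 2 : Polynomial ℕ)) ^ m =
      Polynomial.expand ℕ 2 ((1 + Polynomial.X) ^ m) := by simp
  rw [h, Polynomial.coeff_expand (by norm_num), evenCoeff, Polynomial.coeff_one_add_X_pow]
  simp

/-- Both sides are the coefficient of `X ^ n` in `(1 + X) ^ (2n) = (2X + (1 + X²)) ^ n`. -/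
lemma centralBinom_eq_sum_evenCoeff (n : ℕ) :
    (2 * n).choose n =
      ∑ p ∈ Finset.HasAntidiagonal.antidiagonal n, n.choose p.1 * 2 ^ p.1 * evenCoeff p.2 := by
  have h : ((1 + Polynomial.X : Polynomial ℕ)) ^ (2 * n) =
      (2 * Polynomial.X + (1 + Polynomial.X ^ 2)) ^ n := by
    rw [pow_mul]; congr 1; ring
  have hc := congrArg (fun q => q.coeff n) h
  simp only [Polynomial.coeff_one_add_X_pow, Nat.cast_id] at hc
  rw [hc, (Commute.all _ _).add_pow', Polynomial.finsetSum_coeff]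
  refine Finset.sum_congr rfl fun p hp => ?_
  obtain ⟨j, m⟩ := p
  obtain rfl : j + m = n := Finset.HasAntidiagonal.mem_antidiagonal.mp hp
  have e : ((2 * Polynomial.X : Polynomial ℕ)) ^ j * (1 + Polynomial.X ^ 2) ^ m =
      Polynomial.C (2 ^ j) * ((1 + Polynomial.X ^ 2) ^ m * Polynomial.X ^ j) := by
    rw [mul_pow, map_pow, show (Polynomial.C 2 : Polynomial ℕ) = 2 from rfl]; ring
  rw [Polynomial.coeff_smul]
  dsimp only
  rw [e, Polynomial.coeff_C_mul, add_comm j m, Polynomial.coeff_mul_X_pow,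
    coeff_one_add_X_sq_pow, smul_eq_mul, mul_assoc]

lemma evenCoeff_two_mul_div_factorial (x : ℝ) (m : ℕ) :
    (evenCoeff (2 * m) : ℝ) * x ^ (2 * m) / (Nat.factorial (2 * m) : ℝ) =
      x ^ (2 * m) / (Nat.factorial m : ℝ) ^ 2 := by
  have h := Nat.choose_mul_factorial_mul_factorial (show m ≤ 2 * m by omega)
  rw [show 2 * m - m = m by omega] at h
  have h' : ((2 * m).choose m : ℝ) * (Nat.factorial m) * (Nat.factorial m) =
      (Nat.factorial (2 * m) : ℝ) := by exact_mod_cast h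
  have h1 : (Nat.factorial m : ℝ) ≠ 0 := by positivity
  have h2 : (Nat.factorial (2 * m) : ℝ) ≠ 0 := by positivity
  simp only [evenCoeff, dvd_mul_right, if_true, Nat.mul_div_cancel_left m (Nat.succ_pos 1)]
  rw [div_eq_div_iff h2 (pow_ne_zero 2 h1), ← h']
  ring

/-- Dominated by the exponential series at `x²`, since `m! ≤ (m!)²`. -/
lemma summable_bessel (x : ℝ) :
    Summable fun m : ℕ => x ^ (2 * m) / (Nat.factorial m : ℝ) ^ 2 := by
  refine Summable.of_nonneg_of_le (fun m => ?_) (fun m => ?_)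
    (Real.summable_pow_div_factorial (x ^ 2))
  · rw [pow_mul]; positivity
  · rw [pow_mul]
    have h1 : (1 : ℝ) ≤ Nat.factorial m := by exact_mod_cast Nat.factorial_pos m
    gcongr
    exact le_self_pow₀ h1 two_ne_zero

/-- `I₀(2x)` as a series over all exponents; the odd-indexed terms vanish. -/
lemma hasSum_evenCoeff (x : ℝ) :
    HasSum (fun m : ℕ => (evenCoeff m : ℝ) * x ^ m / (Nat.factorial m : ℝ))
      (∑' m : ℕ, x ^ (2 * m) / (Nat.factorial m : ℝ) ^ 2) := by
  have hinj : Function.Injective fun m : ℕ => 2 * m := fun a b h => by simpa using h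
  refine (hinj.hasSum_iff fun m hm => ?_).mp ?_
  · have h : ¬ 2 ∣ m := fun ⟨k, hk⟩ => hm ⟨k, hk.symm⟩
    simp [evenCoeff, h]
  · simpa only [Function.comp_def, evenCoeff_two_mul_div_factorial] using
      (summable_bessel x).hasSum

/-- The exponential generating function of the central binomial coefficients:
`e^{2x} · ∑_m x^{2m}/(m!)² = ∑_m C(2m, m) x^m/m!`, i.e. it equals `e^{2x}·I₀(2x)`. -/
theorem stmt15 (x : ℝ) :
    Real.exp (2 * x) * ∑' m : ℕ, x ^ (2 * m) / (Nat.factorial m : ℝ) ^ 2 =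
      ∑' m : ℕ, (Nat.choose (2 * m) m : ℝ) * x ^ m / (Nat.factorial m : ℝ) := by
  have hexp : Real.exp (2 * x) = ∑' n : ℕ, (2 * x) ^ n / (Nat.factorial n : ℝ) := by
    rw [Real.exp_eq_exp_ℝ, NormedSpace.exp_eq_tsum_div]
  -- In `ℝ` summability is absolute summability, which the Cauchy product formula needs.
  rw [hexp, ← (hasSum_evenCoeff x).tsum_eq,
    tsum_mul_tsum_eq_tsum_sum_antidiagonal_of_summable_norm
      (Real.summable_pow_div_factorial (2 * x)).norm (hasSum_evenCoeff x).summable.norm]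
  refine tsum_congr fun n => ?_
  rw [centralBinom_eq_sum_evenCoeff, Nat.cast_sum, Finset.sum_mul, Finset.sum_div]
  refine Finset.sum_congr rfl fun p hp => ?_
  obtain ⟨j, m⟩ := p
  obtain rfl : j + m = n := Finset.HasAntidiagonal.mem_antidiagonal.mp hp
  have h : ((j + m).choose j : ℝ) * (Nat.factorial j) * (Nat.factorial m) =
      (Nat.factorial (j + m) : ℝ) := by
    rw [Nat.choose_symm_add]
    exact_mod_cast Nat.add_choose_mul_factorial_mul_factorial j m
  have hc : ((j + m).choose j : ℝ) ≠ 0 := by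
    exact_mod_cast (Nat.choose_pos (Nat.le_add_right j m)).ne'
  push_cast
  rw [← h]
  field_simp
  ring
end
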